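/- arXiv:2306.16183 — 2 statements merged into one kernel-verified Lean document; each statement's English description precedes it below -/
import Mathlib

section
/- Let n ≥ 1, r ∈ (0,1], and s > 0, and let Ω ⊆ ℝⁿ be a convex open set. There exists a constant C depending only on n, r, s such that for every nonnegative F ∈ F^s(Ω), the function F^r belongs to F^{rs}(Ω) and ‖F^r‖_{C^{rs}(Ω)} ≤ ‖F^r‖_{F^{rs}(Ω)} ≤ C · ‖F‖_{F^s(Ω)}^r. -/
open Set ENNReal
open scoped NNReal

noncomputable section

/-- The largest integer strictly less than `s` (for `s > 0`). -/
def lowFloor (s : ℝ) : ℕ := ⌈s⌉₊ - 1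

variable {E : Type*} [NormedAddCommGroup E] [NormedSpace ℝ E]

/-- `max_{0 ≤ m < s} sup_{x ∈ Ω} |∇^m F(x)|`, valued in `ℝ≥0∞`. -/
def derivSup (s : ℝ) (Ω : Set E) (F : E → ℝ) : ℝ≥0∞ :=
  ⨆ (m : ℕ) (_ : m ≤ lowFloor s) (x : E) (_ : x ∈ Ω),
    (‖iteratedFDerivWithin ℝ m F Ω x‖₊ : ℝ≥0∞)

/-- The homogeneous Hölder seminorm `‖F‖_{Ċ^s(Ω)}`, valued in `ℝ≥0∞`. -/
def holderSemi (s : ℝ) (Ω : Set E) (F : E → ℝ) : ℝ≥0∞ :=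
  ⨆ (x : E) (_ : x ∈ Ω) (y : E) (_ : y ∈ Ω) (_ : x ≠ y),
    (‖iteratedFDerivWithin ℝ (lowFloor s) F Ω x
        - iteratedFDerivWithin ℝ (lowFloor s) F Ω y‖₊ : ℝ≥0∞)
      / ENNReal.ofReal (‖x - y‖ ^ (s - (lowFloor s : ℝ)))

/-- The Hölder norm `‖F‖_{C^s(Ω)}`, valued in `ℝ≥0∞`. -/
def csNorm (s : ℝ) (Ω : Set E) (F : E → ℝ) : ℝ≥0∞ :=
  derivSup s Ω F + holderSemi s Ω F

/-- Membership in `C^s(Ω)`. -/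
def MemCs (s : ℝ) (Ω : Set E) (F : E → ℝ) : Prop :=
  ContDiffOn ℝ (lowFloor s : ℕ∞) F Ω ∧ csNorm s Ω F ≠ ∞

/-- The flat seminorm `‖F‖_{Ḟ^s(Ω)}`, valued in `ℝ≥0∞`.  (In `ℝ≥0∞` one has
`0/0 = 0` and `a/0 = ∞` for `a ≠ 0`, matching the paper's conventions; for
`0 < s < 1` the supremum is empty, hence `0`.) -/
def flatSemi (s : ℝ) (Ω : Set E) (F : E → ℝ) : ℝ≥0∞ :=
  ⨆ (m : ℕ) (_ : 1 ≤ m) (_ : m ≤ lowFloor s) (x : E) (_ : x ∈ Ω),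
    ((‖iteratedFDerivWithin ℝ m F Ω x‖₊ : ℝ≥0∞) ^ s
      / ENNReal.ofReal (F x) ^ (s - (m : ℝ))) ^ (1 / (m : ℝ))

/-- Membership in the cone `F^s(Ω)`. -/
def MemFs (s : ℝ) (Ω : Set E) (F : E → ℝ) : Prop :=
  MemCs s Ω F ∧ (∀ x ∈ Ω, 0 ≤ F x) ∧ flatSemi s Ω F ≠ ∞

/-- The norm `‖F‖_{F^s(Ω)} = ‖F‖_{C^s(Ω)} + ‖F‖_{Ḟ^s(Ω)}`. -/
def fsNorm (s : ℝ) (Ω : Set E) (F : E → ℝ) : ℝ≥0∞ :=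
  csNorm s Ω F + flatSemi s Ω F

/-- `sup_{x ∈ Ω} |F(x)|`, valued in `ℝ≥0∞`. -/
def supNormSet (Ω : Set E) (F : E → ℝ) : ℝ≥0∞ :=
  ⨆ (x : E) (_ : x ∈ Ω), (‖F x‖₊ : ℝ≥0∞)

/-- `P` is (the function given by) a polynomial of degree at most `D`. -/
def IsPolyDeg (D : ℕ) (P : E → ℝ) : Prop :=
  ContDiff ℝ (⊤ : ℕ∞) P ∧ ∀ x, iteratedFDeriv ℝ (D + 1) P x = 0

/-- The degree-`D` Taylor polynomial (jet) of `F` at `x`, as a function. -/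
def jetAt (D : ℕ) (F : E → ℝ) (x : E) : E → ℝ :=
  fun y => ∑ m ∈ Finset.range (D + 1),
    (iteratedFDeriv ℝ m F x fun _ => y - x) / m.factorial

/-- The degree-`D` Taylor polynomial of `F` at `x` using derivatives within `Ω`. -/
def jetWithinAt (D : ℕ) (F : E → ℝ) (Ω : Set E) (x : E) : E → ℝ :=
  fun y => ∑ m ∈ Finset.range (D + 1),
    (iteratedFDerivWithin ℝ m F Ω x fun _ => y - x) / m.factorial

/-- The pointwise flatness quantity `max_{1≤m<s} (|∇^m P(x)|^s / P(x)^{s-m})^{1/m}`. -/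
def jetFlatAt (s : ℝ) (P : E → ℝ) (x : E) : ℝ≥0∞ :=
  ⨆ (m : ℕ) (_ : 1 ≤ m) (_ : m ≤ lowFloor s),
    ((‖iteratedFDeriv ℝ m P x‖₊ : ℝ≥0∞) ^ s
      / ENNReal.ofReal (P x) ^ (s - (m : ℝ))) ^ (1 / (m : ℝ))

/-- The set `Γ(x₀, M)` of flat nonnegative jets. -/
def Gamma (s : ℝ) (x₀ : E) (M : ℝ) : Set (E → ℝ) :=
  {P | IsPolyDeg (lowFloor s) P ∧ 0 ≤ P x₀ ∧
    (∀ m ≤ lowFloor s, ‖iteratedFDeriv ℝ m P x₀‖ ≤ M) ∧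
    jetFlatAt s P x₀ ≤ ENNReal.ofReal M}

/-- `‖P⃗‖_{J C^s(E)}` for a family of jets `P : E → (E → ℝ)`. -/
def jetCNorm (s : ℝ) (Eset : Set E) (P : E → E → ℝ) : ℝ≥0∞ :=
  (⨆ (x : E) (_ : x ∈ Eset) (m : ℕ) (_ : m ≤ lowFloor s),
      (‖iteratedFDeriv ℝ m (P x) x‖₊ : ℝ≥0∞))
  + ⨆ (x : E) (_ : x ∈ Eset) (y : E) (_ : y ∈ Eset) (_ : x ≠ y)
      (m : ℕ) (_ : m ≤ lowFloor s),
      (‖iteratedFDeriv ℝ m (P x - P y) y‖₊ : ℝ≥0∞)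
        / ENNReal.ofReal (‖x - y‖ ^ (s - (m : ℝ)))

/-- `‖P⃗‖_{J Ḟ^s(E)}` for a family of jets. -/
def jetFlatNorm (s : ℝ) (Eset : Set E) (P : E → E → ℝ) : ℝ≥0∞ :=
  ⨆ (x : E) (_ : x ∈ Eset) (m : ℕ) (_ : 1 ≤ m) (_ : m ≤ lowFloor s),
    ((‖iteratedFDeriv ℝ m (P x) x‖₊ : ℝ≥0∞) ^ s
      / ENNReal.ofReal |P x x| ^ (s - (m : ℝ))) ^ (1 / (m : ℝ))

/-- `‖P⃗‖_{J F^s(E)}`. -/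
def jetFsNorm (s : ℝ) (Eset : Set E) (P : E → E → ℝ) : ℝ≥0∞ :=
  jetCNorm s Eset P + jetFlatNorm s Eset P

/-- The trace norm `‖f‖_{F^s(S)}` (with `inf ∅ = ∞`). -/
def traceNorm (s : ℝ) (S : Set E) (f : E → ℝ) : ℝ≥0∞ :=
  ⨅ (F : E → ℝ) (_ : MemFs s (univ : Set E) F ∧ ∀ x ∈ S, F x = f x),
    fsNorm s (univ : Set E) F

/-!
Suppose first that `s > 1`. Around a point `x` with `A = F x > 0`, flatness says that
`|∇^m F x| ≤ A * D ^ m` with `D = (M / A) ^ (1 / s)`, where `M` is the norm of `F`. The case `m = 1`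
makes `F ^ (1 / s)` Lipschitz, so `F` stays comparable to `A` on the ball of radius `1 / (2 * D)`.
The Faà di Bruno formula is homogeneous, hence on that ball the derivatives of `F ^ r` are governed
by the same scale: they are at most `C * A ^ r * D ^ m`, and the Hölder estimate holds there. For
points further apart than `1 / (2 * D)` the Hölder estimate follows from the triangle inequality.

At a zero `x` of `F`, the Lipschitz bound gives `F y ≤ M * |y - x| ^ s`, so the derivatives of
`F ^ r` of order `m < r * s` decay like `|y - x| ^ (r * s - m)`. They therefore extend by zero
across the zero set, and `F ^ r` has the required smoothness.

For `s ≤ 1` everything reduces to the subadditivity of `t ↦ t ^ r`.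
-/

section RealPowers

theorem abs_rpow_sub_rpow_le {a b r : ℝ} (ha : 0 ≤ a) (hb : 0 ≤ b) (hr0 : 0 ≤ r) (hr1 : r ≤ 1) :
    |a ^ r - b ^ r| ≤ |a - b| ^ r := by
  wlog hab : b ≤ a generalizing a b
  · rw [abs_sub_comm, abs_sub_comm a]
    exact this hb ha (le_of_not_ge hab)
  have hadd := Real.rpow_add_le_add_rpow (sub_nonneg.2 hab) hb hr0 hr1
  rw [sub_add_cancel] at hadd
  have hmono : b ^ r ≤ a ^ r := by gcongr
  rw [abs_of_nonneg (sub_nonneg.2 hmono), abs_of_nonneg (sub_nonneg.2 hab)]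
  linarith

theorem one_le_two_mul_rpow {t σ : ℝ} (ht : 1 / 2 ≤ t) (hσ0 : 0 ≤ σ) (hσ1 : σ ≤ 1) :
    1 ≤ 2 * t ^ σ := by
  have hhalf : (1 / 2 : ℝ) ≤ (1 / 2) ^ σ :=
    Real.self_le_rpow_of_le_one (by norm_num) (by norm_num) hσ1
  have hmono : (1 / 2 : ℝ) ^ σ ≤ t ^ σ := by gcongr
  linarith

theorem self_mem_Icc_inv_mul_mul {a L : ℝ} (hL : 1 ≤ L) (ha : 0 ≤ a) :
    a ∈ Icc (L⁻¹ * a) (L * a) :=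
  ⟨mul_le_of_le_one_left ha (inv_le_one_of_one_le₀ hL), le_mul_of_one_le_left ha hL⟩

theorem rpow_le_rpow_abs_mul_rpow {a b L p : ℝ} (hL : 1 ≤ L) (ha : 0 < a)
    (hb : b ∈ Icc (L⁻¹ * a) (L * a)) : b ^ p ≤ L ^ |p| * a ^ p := by
  have hL0 : 0 < L := one_pos.trans_le hL
  have hb0 : 0 < b := lt_of_lt_of_le (by positivity) hb.1
  rcases le_total 0 p with hp | hp
  · rw [abs_of_nonneg hp, ← Real.mul_rpow hL0.le ha.le]
    exact Real.rpow_le_rpow hb0.le hb.2 hp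
  · rw [abs_of_nonpos hp, Real.rpow_neg hL0.le, ← Real.inv_rpow hL0.le,
      ← Real.mul_rpow (by positivity) ha.le]
    exact Real.rpow_le_rpow_of_nonpos (by positivity) hb.1 hp

theorem le_rpow_mul_rpow_of_le {r s C K M A a : ℝ} (hr0 : 0 < r) (hs : 0 < s) (hC : 1 ≤ C)
    (hK : C ^ (r * s) ≤ K) (hM : 0 ≤ M) (hA : 0 ≤ A) {m : ℕ} (hm : 1 ≤ m)
    (ha : a ≤ C * (M ^ (m / s) * A ^ (r - m / s))) :
    a ≤ (K * M ^ r) ^ (m / (r * s)) * (A ^ r) ^ (1 - m / (r * s)) := by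
  have hK0 : 0 ≤ K := le_trans (by positivity) hK
  have hCK : C ≤ K ^ (m / (r * s)) := by
    calc C ≤ C ^ (m : ℝ) := Real.self_le_rpow_of_one_le hC (by exact_mod_cast hm)
      _ = (C ^ (r * s)) ^ (m / (r * s)) := by
          rw [← Real.rpow_mul (by linarith)]
          congr 1
          field_simp
      _ ≤ K ^ (m / (r * s)) := by gcongr
  have hexpM : r * (m / (r * s)) = m / s := by field_simp
  have hexpA : r * (1 - m / (r * s)) = r - m / s := by field_simp
  rw [Real.mul_rpow hK0 (by positivity), ← Real.rpow_mul hM, ← Real.rpow_mul hA, mul_assoc, hexpM,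
    hexpA]
  exact ha.trans (by gcongr)

theorem norm_iteratedFDeriv_rpow_const (r : ℝ) {a : ℝ} (ha : 0 < a) (j : ℕ) :
    ‖iteratedFDeriv ℝ j (fun t : ℝ => t ^ r) a‖ = |(descPochhammer ℝ j).eval r| * a ^ (r - j) := by
  rw [norm_iteratedFDeriv_eq_norm_iteratedDeriv, iteratedDeriv_eq_iterate,
    Real.iter_deriv_rpow_const, norm_mul, Real.norm_eq_abs,
    Real.norm_of_nonneg (Real.rpow_nonneg ha.le _)]

/-- A constant bounding the derivatives of `t ↦ t ^ r` of order at most `n + 1`, up to the power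
of `a` dictated by homogeneity, at all points comparable to `a` up to a factor `L`. -/
def rpowDerivConst (r L : ℝ) (n : ℕ) : ℝ :=
  1 + ∑ j ∈ Finset.range (n + 2), |(descPochhammer ℝ j).eval r| * L ^ |r - j|

theorem one_le_rpowDerivConst (r : ℝ) {L : ℝ} (hL : 0 ≤ L) (n : ℕ) : 1 ≤ rpowDerivConst r L n :=
  le_add_of_nonneg_right (by positivity)

theorem norm_iteratedFDeriv_rpow_const_le (r : ℝ) {a b L : ℝ} (hL : 1 ≤ L) (ha : 0 < a)
    (hb : b ∈ Icc (L⁻¹ * a) (L * a)) {j n : ℕ} (hj : j ≤ n + 1) :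
    ‖iteratedFDeriv ℝ j (fun t : ℝ => t ^ r) b‖ ≤ rpowDerivConst r L n * (a ^ r / a ^ j) := by
  have hb0 : 0 < b := lt_of_lt_of_le (by positivity) hb.1
  have hterm : |(descPochhammer ℝ j).eval r| * L ^ |r - j| ≤ rpowDerivConst r L n :=
    (Finset.single_le_sum (f := fun j : ℕ => |(descPochhammer ℝ j).eval r| * L ^ |r - j|)
      (fun _ _ => by positivity) (Finset.mem_range.2 (by lia))).trans
      (le_add_of_nonneg_left zero_le_one)
  calc ‖iteratedFDeriv ℝ j (fun t : ℝ => t ^ r) b‖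
      = |(descPochhammer ℝ j).eval r| * b ^ (r - j) := norm_iteratedFDeriv_rpow_const r hb0 j
    _ ≤ |(descPochhammer ℝ j).eval r| * (L ^ |r - j| * a ^ (r - j)) := by
        gcongr
        exact rpow_le_rpow_abs_mul_rpow hL ha hb
    _ = |(descPochhammer ℝ j).eval r| * L ^ |r - j| * (a ^ r / a ^ j) := by
        rw [Real.rpow_sub_natCast ha.ne', mul_assoc]
    _ ≤ rpowDerivConst r L n * (a ^ r / a ^ j) := by gcongr

theorem norm_iteratedFDeriv_rpow_const_sub_le (r : ℝ) {a b L : ℝ} (hL : 1 ≤ L) (ha : 0 < a)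
    (hb : b ∈ Icc (L⁻¹ * a) (L * a)) {j n : ℕ} (hj : j ≤ n) :
    ‖iteratedFDeriv ℝ j (fun t : ℝ => t ^ r) a - iteratedFDeriv ℝ j (fun t : ℝ => t ^ r) b‖ ≤
      rpowDerivConst r L n * (|a - b| / a) * (a ^ r / a ^ j) := by
  have hpos : ∀ t ∈ Icc (L⁻¹ * a) (L * a), 0 < t := fun t ht =>
    lt_of_lt_of_le (by positivity) ht.1
  have hmv := (convex_Icc (L⁻¹ * a) (L * a)).norm_image_sub_le_of_norm_hasFDerivWithin_le
    (f := iteratedFDeriv ℝ j fun t : ℝ => t ^ r)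
    (C := rpowDerivConst r L n * (a ^ r / a ^ (j + 1)))
    (fun t ht => (ContDiffAt.differentiableAt_iteratedFDeriv (m := j) (n := (j + 1 : ℕ))
      (Real.contDiffAt_rpow_const_of_ne (hpos t ht).ne')
      (by exact_mod_cast j.lt_succ_self)).hasFDerivAt.hasFDerivWithinAt)
    (fun t ht => norm_fderiv_iteratedFDeriv.trans_le
      (norm_iteratedFDeriv_rpow_const_le r hL ha ht (by lia))) hb
    (self_mem_Icc_inv_mul_mul hL ha.le)
  refine hmv.trans_eq ?_
  rw [Real.norm_eq_abs]
  field_simp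
  ring

end RealPowers

section TaylorComposition

variable {𝕜 V W G : Type*} [NontriviallyNormedField 𝕜]
  [NormedAddCommGroup V] [NormedSpace 𝕜 V] [NormedAddCommGroup W] [NormedSpace 𝕜 W]
  [NormedAddCommGroup G] [NormedSpace 𝕜 G]

theorem norm_continuousMultilinearMap_image_sub_le_of_weights {ι : Type*} [Fintype ι]
    {X : ι → Type*} [∀ i, NormedAddCommGroup (X i)] [∀ i, NormedSpace 𝕜 (X i)]
    (f : ContinuousMultilinearMap 𝕜 X G) {u v : ∀ i, X i} {w : ι → ℝ} {θ : ℝ}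
    (hu : ∀ i, ‖u i‖ ≤ w i) (hv : ∀ i, ‖v i‖ ≤ w i) (huv : ∀ i, ‖u i - v i‖ ≤ θ * w i) :
    ‖f u - f v‖ ≤ ‖f‖ * (Fintype.card ι * θ * ∏ i, w i) := by
  classical
  have hterm (i : ι) :
      (∏ j, if j = i then ‖u i - v i‖ else max ‖u j‖ ‖v j‖) ≤ θ * ∏ j, w j := by
    calc (∏ j, if j = i then ‖u i - v i‖ else max ‖u j‖ ‖v j‖)
        ≤ ∏ j, (if j = i then θ else 1) * w j := by
          refine Finset.prod_le_prod (fun j _ => by positivity) fun j _ => ?_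
          split_ifs with hji
          · exact hji ▸ huv i
          · rw [one_mul]
            exact max_le (hu j) (hv j)
      _ = θ * ∏ j, w j := by
          rw [Finset.prod_mul_distrib, Finset.prod_ite_eq' Finset.univ i,
            if_pos (Finset.mem_univ i)]
  calc ‖f u - f v‖ ≤ ‖f‖ * ∑ i, ∏ j, if j = i then ‖u i - v i‖ else max ‖u j‖ ‖v j‖ :=
        f.norm_image_sub_le' u v
    _ ≤ ‖f‖ * ∑ _i : ι, θ * ∏ j, w j := by gcongr with i; exact hterm i
    _ = ‖f‖ * (Fintype.card ι * θ * ∏ i, w i) := by simp [mul_assoc]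

theorem norm_compAlongOrderedFinpartition_sub_le_of_weights {n : ℕ} (c : OrderedFinpartition n)
    (f₁ f₂ : W [×c.length]→L[𝕜] G) {g₁ g₂ : ∀ i, V [×c.partSize i]→L[𝕜] W}
    {w : Fin c.length → ℝ} {θ : ℝ} (hg₁ : ∀ i, ‖g₁ i‖ ≤ w i) (hg₂ : ∀ i, ‖g₂ i‖ ≤ w i)
    (hg : ∀ i, ‖g₁ i - g₂ i‖ ≤ θ * w i) (hθ : 0 ≤ θ) :
    ‖c.compAlongOrderedFinpartition f₁ g₁ - c.compAlongOrderedFinpartition f₂ g₂‖ ≤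
      (‖f₁‖ * (c.length * θ) + ‖f₁ - f₂‖) * ∏ i, w i := by
  have hw (i) : 0 ≤ w i := (norm_nonneg _).trans (hg₁ i)
  have hinner : ‖c.compAlongOrderedFinpartition f₁ g₁ - c.compAlongOrderedFinpartition f₁ g₂‖ ≤
      ‖f₁‖ * (c.length * θ * ∏ i, w i) := by
    refine (norm_continuousMultilinearMap_image_sub_le_of_weights
      (c.compAlongOrderedFinpartitionL 𝕜 V W G f₁) hg₁ hg₂ hg).trans ?_
    rw [Fintype.card_fin]
    have := Finset.prod_nonneg fun i (_ : i ∈ Finset.univ) => hw i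
    gcongr
    exact c.norm_compAlongOrderedFinpartitionL_apply_le f₁
  have houter : ‖c.compAlongOrderedFinpartition f₁ g₂ - c.compAlongOrderedFinpartition f₂ g₂‖ ≤
      ‖f₁ - f₂‖ * ∏ i, w i := by
    refine (c.norm_compAlongOrderedFinpartition_le (f₁ - f₂) g₂).trans ?_
    gcongr with i
    exact hg₂ i
  calc _ ≤ _ := norm_sub_le_norm_sub_add_norm_sub _ (c.compAlongOrderedFinpartition f₁ g₂) _
    _ ≤ ‖f₁‖ * (c.length * θ * ∏ i, w i) + ‖f₁ - f₂‖ * ∏ i, w i := add_le_add hinner houter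
    _ = (‖f₁‖ * (c.length * θ) + ‖f₁ - f₂‖) * ∏ i, w i := by ring

theorem prod_const_mul_pow_partSize {R : Type*} [CommMonoid R] {n : ℕ}
    (c : OrderedFinpartition n) (a d : R) :
    ∏ i, a * d ^ c.partSize i = a ^ c.length * d ^ n := by
  simpa [Finset.prod_mul_distrib] using congrArg (a ^ c.length * ·)
    (c.prod_sigma_eq_prod fun _ => d)

/-- The constant in the homogeneous bounds for the `n`-th term of a composition of Taylor series
whose coefficients are bounded by `B`. -/
def taylorCompConst (n : ℕ) (B : ℝ) : ℝ :=
  Fintype.card (OrderedFinpartition n) * ((n + 1) * B ^ (n + 1))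

theorem taylorCompConst_nonneg (n : ℕ) {B : ℝ} (hB : 0 ≤ B) : 0 ≤ taylorCompConst n B := by
  unfold taylorCompConst
  positivity

variable {p p₁ p₂ : FormalMultilinearSeries 𝕜 W G} {q q₁ q₂ : FormalMultilinearSeries 𝕜 V W}
  {n : ℕ} {A B D R θ : ℝ}

theorem norm_taylorComp_sub_le (hA : 0 < A) (hB : 1 ≤ B) (hD : 0 ≤ D) (hR : 0 ≤ R) (hθ : 0 ≤ θ)
    (hp₁ : ∀ j ≤ n, ‖p₁ j‖ ≤ B * (R / A ^ j))
    (hp : ∀ j ≤ n, ‖p₁ j - p₂ j‖ ≤ B * θ * (R / A ^ j))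
    (hq₁ : ∀ i ≤ n, ‖q₁ i‖ ≤ B * (A * D ^ i)) (hq₂ : ∀ i ≤ n, ‖q₂ i‖ ≤ B * (A * D ^ i))
    (hq : ∀ i ≤ n, ‖q₁ i - q₂ i‖ ≤ B * θ * (A * D ^ i)) :
    ‖p₁.taylorComp q₁ n - p₂.taylorComp q₂ n‖ ≤ taylorCompConst n B * θ * (R * D ^ n) := by
  have hterm (c : OrderedFinpartition n) :
      ‖p₁.compAlongOrderedFinpartition q₁ c - p₂.compAlongOrderedFinpartition q₂ c‖ ≤
        (n + 1) * B ^ (n + 1) * θ * (R * D ^ n) := by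
    refine (norm_compAlongOrderedFinpartition_sub_le_of_weights c (p₁ c.length) (p₂ c.length)
      (w := fun i => B * A * D ^ c.partSize i) (θ := θ)
      (fun i => (hq₁ _ (c.partSize_le i)).trans_eq (by ring))
      (fun i => (hq₂ _ (c.partSize_le i)).trans_eq (by ring))
      (fun i => (hq _ (c.partSize_le i)).trans_eq (by ring)) hθ).trans ?_
    rw [prod_const_mul_pow_partSize]
    calc _ ≤ (B * (R / A ^ c.length) * (c.length * θ) + B * θ * (R / A ^ c.length)) *
          ((B * A) ^ c.length * D ^ n) := by
          gcongr
          · exact hp₁ _ c.length_le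
          · exact hp _ c.length_le
      _ = (c.length + 1) * B ^ (c.length + 1) * θ * (R * D ^ n) := by
          rw [mul_pow]
          field_simp
          ring
      _ ≤ (n + 1) * B ^ (n + 1) * θ * (R * D ^ n) := by
          gcongr <;> exact c.length_le
  calc ‖p₁.taylorComp q₁ n - p₂.taylorComp q₂ n‖
      = ‖∑ c : OrderedFinpartition n,
          (p₁.compAlongOrderedFinpartition q₁ c - p₂.compAlongOrderedFinpartition q₂ c)‖ := by
        rw [Finset.sum_sub_distrib]; rfl
    _ ≤ ∑ _c : OrderedFinpartition n, (n + 1) * B ^ (n + 1) * θ * (R * D ^ n) :=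
        norm_sum_le_of_le _ fun c _ => hterm c
    _ = taylorCompConst n B * θ * (R * D ^ n) := by
        rw [Finset.sum_const, Finset.card_univ, nsmul_eq_mul, taylorCompConst]
        ring

theorem norm_taylorComp_le (hA : 0 < A) (hB : 1 ≤ B) (hD : 0 ≤ D) (hR : 0 ≤ R)
    (hp : ∀ j ≤ n, ‖p j‖ ≤ B * (R / A ^ j)) (hq : ∀ i ≤ n, ‖q i‖ ≤ B * (A * D ^ i)) :
    ‖p.taylorComp q n‖ ≤ taylorCompConst n B * (R * D ^ n) := by
  have hzero : (0 : FormalMultilinearSeries 𝕜 W G).taylorComp q n = 0 :=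
    Finset.sum_eq_zero fun _ _ => rfl
  simpa [hzero] using norm_taylorComp_sub_le (p₂ := 0) (q₂ := q) hA hB hD hR zero_le_one hp
    (by simpa using hp) hq hq fun i _ => by rw [sub_self, norm_zero]; positivity

end TaylorComposition

section SmoothnessAcrossZeros

variable {𝕜 V G : Type*} [NontriviallyNormedField 𝕜] [NormedAddCommGroup V] [NormedSpace 𝕜 V]
  [NormedAddCommGroup G] [NormedSpace 𝕜 G]

theorem norm_iteratedFDeriv_zero_sub (f : V → G) (x y : V) :
    ‖iteratedFDeriv 𝕜 0 f x - iteratedFDeriv 𝕜 0 f y‖ = ‖f x - f y‖ := by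
  simp only [iteratedFDeriv_zero_eq_comp, Function.comp_apply, ← map_sub,
    LinearIsometryEquiv.norm_map]

theorem hasFDerivAt_zero_of_norm_le_rpow {g : V → G} {Ω : Set V} {x : V} {K β : ℝ} (hβ : 1 < β)
    (hΩ : Ω ∈ nhds x) (hg : ∀ y ∈ Ω, ‖g y‖ ≤ K * ‖y - x‖ ^ β) :
    HasFDerivAt g (0 : V →L[𝕜] G) x := by
  have hgx : g x = 0 := by
    have hx := hg x (mem_of_mem_nhds hΩ)
    rwa [sub_self, norm_zero, Real.zero_rpow (by linarith), mul_zero, norm_le_zero_iff] at hx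
  have hbig : g =O[nhds x] fun y => ‖y - x‖ ^ β := by
    refine Asymptotics.IsBigO.of_bound K ?_
    filter_upwards [hΩ] with y hy
    rw [Real.norm_of_nonneg (by positivity)]
    exact hg y hy
  have htendsto : Filter.Tendsto (fun y => ‖y - x‖ ^ (β - 1)) (nhds x) (nhds 0) := by
    have hcont : Continuous fun y => ‖y - x‖ ^ (β - 1) :=
      (continuous_id.sub continuous_const).norm.rpow_const fun _ => Or.inr (by linarith)
    simpa [Real.zero_rpow (sub_pos.2 hβ).ne'] using hcont.tendsto x
  have hlittle : (fun y => ‖y - x‖ ^ β) =o[nhds x] fun y => y - x := by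
    have hmul := ((Asymptotics.isLittleO_one_iff ℝ).2 htendsto).mul_isBigO
      (Asymptotics.isBigO_refl (fun y => ‖y - x‖) (nhds x))
    refine (hmul.congr (fun y => ?_) fun y => one_mul _).of_norm_right
    rw [← Real.rpow_add_one' (norm_nonneg _) (by linarith), sub_add_cancel]
  refine HasFDerivAt.of_isLittleO ((hbig.trans_isLittleO hlittle).congr_left fun y => ?_)
  rw [hgx, sub_zero, zero_apply, sub_zero]

variable {f : V → G} {Ω : Set V} {l : ℕ} {K t : ℝ}

theorem iteratedFDeriv_eq_zero_of_decay (hΩ : IsOpen Ω) (hlt : l < t)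
    (hdecay : ∀ m ≤ l, ∀ x ∈ Ω, f x = 0 → ∀ y ∈ Ω, f y ≠ 0 →
      ‖iteratedFDeriv 𝕜 m f y‖ ≤ K * ‖y - x‖ ^ (t - m))
    (hK : 0 ≤ K) {m : ℕ} (hm : m ≤ l) {x : V} (hx : x ∈ Ω) (hfx : f x = 0) :
    iteratedFDeriv 𝕜 m f x = 0 := by
  induction m generalizing x with
  | zero => rw [← norm_eq_zero, norm_iteratedFDeriv_zero, hfx, norm_zero]
  | succ m ih =>
    have hmt : 1 < t - m := by
      have : ((m + 1 : ℕ) : ℝ) ≤ l := by exact_mod_cast hm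
      push_cast at this
      linarith
    have hderiv : HasFDerivAt (iteratedFDeriv 𝕜 m f) (0 : V →L[𝕜] V [×m]→L[𝕜] G) x := by
      refine hasFDerivAt_zero_of_norm_le_rpow (K := K) hmt (hΩ.mem_nhds hx) fun y hy => ?_
      by_cases hfy : f y = 0
      · rw [ih (by lia) hy hfy, norm_zero]
        positivity
      · exact hdecay m (by lia) x hx hfx y hy hfy
    ext v
    rw [iteratedFDeriv_succ_apply_left, hderiv.fderiv, zero_apply, zero_apply, zero_apply]

theorem norm_iteratedFDeriv_le_of_decay (hΩ : IsOpen Ω) (hlt : l < t)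
    (hdecay : ∀ m ≤ l, ∀ x ∈ Ω, f x = 0 → ∀ y ∈ Ω, f y ≠ 0 →
      ‖iteratedFDeriv 𝕜 m f y‖ ≤ K * ‖y - x‖ ^ (t - m))
    (hK : 0 ≤ K) {m : ℕ} (hm : m ≤ l) {x y : V} (hx : x ∈ Ω) (hfx : f x = 0) (hy : y ∈ Ω) :
    ‖iteratedFDeriv 𝕜 m f y‖ ≤ K * ‖y - x‖ ^ (t - m) := by
  by_cases hfy : f y = 0
  · rw [iteratedFDeriv_eq_zero_of_decay hΩ hlt hdecay hK hm hy hfy, norm_zero]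
    positivity
  · exact hdecay m hm x hx hfx y hy hfy

theorem contDiffOn_of_decay (hΩ : IsOpen Ω) (hlt : l < t)
    (hdecay : ∀ m ≤ l, ∀ x ∈ Ω, f x = 0 → ∀ y ∈ Ω, f y ≠ 0 →
      ‖iteratedFDeriv 𝕜 m f y‖ ≤ K * ‖y - x‖ ^ (t - m))
    (hK : 0 ≤ K) (hf : ∀ x ∈ Ω, f x ≠ 0 → ContDiffAt 𝕜 l f x) : ContDiffOn 𝕜 l f Ω := by
  have hcongr (m : ℕ) : EqOn (iteratedFDerivWithin 𝕜 m f Ω) (iteratedFDeriv 𝕜 m f) Ω :=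
    fun x hx => iteratedFDerivWithin_of_isOpen m hΩ hx
  refine (contDiffOn_nat_iff_continuousOn_differentiableOn hΩ.uniqueDiffOn).2
    ⟨fun m hm => ContinuousOn.congr (fun x hx => ?_) (hcongr m),
      fun m hm => DifferentiableOn.congr (fun x hx => ?_) (hcongr m)⟩
  · by_cases hfx : f x = 0
    · have hmt : 0 < t - m := by
        have : (m : ℝ) ≤ l := by exact_mod_cast hm
        linarith
      have hlim : Filter.Tendsto (fun y => K * ‖y - x‖ ^ (t - m)) (nhdsWithin x Ω) (nhds 0) := by
        have hcont : Continuous fun y => K * ‖y - x‖ ^ (t - m) := continuous_const.mul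
          ((continuous_id.sub continuous_const).norm.rpow_const fun _ => Or.inr hmt.le)
        have := hcont.tendsto x
        rw [sub_self, norm_zero, Real.zero_rpow hmt.ne', mul_zero] at this
        exact this.mono_left nhdsWithin_le_nhds
      rw [ContinuousWithinAt, iteratedFDeriv_eq_zero_of_decay hΩ hlt hdecay hK hm hx hfx]
      refine squeeze_zero_norm' ?_ hlim
      filter_upwards [self_mem_nhdsWithin] with y hy
      exact norm_iteratedFDeriv_le_of_decay hΩ hlt hdecay hK hm hx hfx hy
    · exact ((hf x hx hfx).continuousAt_iteratedFDeriv (by exact_mod_cast hm)).continuousWithinAt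
  · by_cases hfx : f x = 0
    · have hmt : 1 < t - m := by
        have : ((m + 1 : ℕ) : ℝ) ≤ l := by exact_mod_cast hm
        push_cast at this
        linarith
      exact (hasFDerivAt_zero_of_norm_le_rpow hmt (hΩ.mem_nhds hx) fun y hy =>
        norm_iteratedFDeriv_le_of_decay hΩ hlt hdecay hK hm.le hx hfx
          hy).differentiableAt.differentiableWithinAt
    · exact ((hf x hx hfx).differentiableAt_iteratedFDeriv
        (by exact_mod_cast hm)).differentiableWithinAt

end SmoothnessAcrossZeros

section LipschitzPowers

variable {Ω : Set E} {F : E → ℝ} {L p : ℝ}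

theorem abs_rpow_sub_rpow_le_of_norm_fderiv_le_of_pos (hconv : Convex ℝ Ω)
    (hd : ∀ z ∈ Ω, DifferentiableAt ℝ F z) (hF : ∀ z ∈ Ω, 0 < F z)
    (hbound : ∀ z ∈ Ω, ‖fderiv ℝ F z‖ ≤ L * F z ^ (1 - p)) {x y : E} (hx : x ∈ Ω) (hy : y ∈ Ω) :
    |F x ^ p - F y ^ p| ≤ |p| * L * ‖x - y‖ := by
  refine hconv.norm_image_sub_le_of_norm_hasFDerivWithin_le
    (fun z hz => ((hd z hz).hasFDerivAt.rpow_const (Or.inl (hF z hz).ne')).hasFDerivWithinAt)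
    (fun z hz => ?_) hy hx
  have hFz := hF z hz
  rw [norm_smul, norm_mul, Real.norm_eq_abs, Real.norm_of_nonneg (by positivity)]
  calc |p| * F z ^ (p - 1) * ‖fderiv ℝ F z‖
      ≤ |p| * F z ^ (p - 1) * (L * F z ^ (1 - p)) := by gcongr; exact hbound z hz
    _ = |p| * L * (F z ^ (p - 1) * F z ^ (1 - p)) := by ring
    _ = |p| * L := by rw [← Real.rpow_add hFz]; simp

theorem abs_rpow_sub_rpow_le_of_norm_fderiv_le (hconv : Convex ℝ Ω) (hp0 : 0 < p) (hp1 : p ≤ 1)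
    (hL : 0 ≤ L) (hd : ∀ z ∈ Ω, DifferentiableAt ℝ F z) (hF : ∀ z ∈ Ω, 0 ≤ F z)
    (hbound : ∀ z ∈ Ω, ‖fderiv ℝ F z‖ ≤ L * F z ^ (1 - p)) {x y : E} (hx : x ∈ Ω) (hy : y ∈ Ω) :
    |F x ^ p - F y ^ p| ≤ p * L * ‖x - y‖ := by
  have hshift (ε : ℝ) (hε : 0 < ε) : |(F x + ε) ^ p - (F y + ε) ^ p| ≤ p * L * ‖x - y‖ := by
    rw [← congrArg (· * L * ‖x - y‖) (abs_of_pos hp0)]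
    refine abs_rpow_sub_rpow_le_of_norm_fderiv_le_of_pos (F := fun z => F z + ε) hconv
      (fun z hz => (hd z hz).add_const ε) (fun z hz => by linarith [hF z hz]) (fun z hz => ?_)
      hx hy
    rw [fderiv_add_const]
    have hFz := hF z hz
    refine (hbound z hz).trans ?_
    gcongr
    linarith
  have hlim (a : ℝ) : Filter.Tendsto (fun ε : ℝ => (a + ε) ^ p) (nhdsWithin 0 (Ioi 0))
      (nhds (a ^ p)) := by
    have hcont : Continuous fun ε : ℝ => (a + ε) ^ p :=
      (continuous_const.add continuous_id).rpow_const fun _ => Or.inr hp0.le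
    simpa using (hcont.tendsto 0).mono_left nhdsWithin_le_nhds
  exact le_of_tendsto ((hlim (F x)).sub (hlim (F y))).abs
    (by filter_upwards [self_mem_nhdsWithin] with ε hε using hshift ε hε)

end LipschitzPowers

theorem lowFloor_lt {s : ℝ} (hs : 0 < s) : lowFloor s < s :=
  Nat.lt_ceil.1 (Nat.sub_lt (Nat.ceil_pos.2 hs) one_pos)

theorem le_lowFloor_add_one (s : ℝ) : s ≤ lowFloor s + 1 := by
  have hceil : ⌈s⌉₊ ≤ lowFloor s + 1 := Nat.le_add_of_sub_le le_rfl
  exact (Nat.le_ceil s).trans (by exact_mod_cast hceil)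

theorem lowFloor_mono {s t : ℝ} (hst : s ≤ t) : lowFloor s ≤ lowFloor t :=
  Nat.sub_le_sub_right (Nat.ceil_mono hst) 1

theorem natCast_lt_of_le_lowFloor {s : ℝ} (hs : 0 < s) {m : ℕ} (hm : m ≤ lowFloor s) : m < s :=
  lt_of_le_of_lt (by exact_mod_cast hm) (lowFloor_lt hs)

theorem lowFloor_pos {s : ℝ} (hs : 1 < s) : 0 < lowFloor s :=
  Nat.sub_pos_of_lt (Nat.lt_ceil.2 (by simpa using hs))

theorem lowFloor_eq_zero {s : ℝ} (hs : s ≤ 1) : lowFloor s = 0 :=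
  Nat.sub_eq_zero_of_le (Nat.ceil_le.2 (by simpa using hs))

section Seminorms

variable {s M : ℝ} {Ω : Set E} {F : E → ℝ}

theorem derivSup_le_ofReal_iff (hΩ : IsOpen Ω) (hM : 0 ≤ M) :
    derivSup s Ω F ≤ ENNReal.ofReal M ↔
      ∀ m ≤ lowFloor s, ∀ x ∈ Ω, ‖iteratedFDeriv ℝ m F x‖ ≤ M := by
  simp only [derivSup, iSup_le_iff]
  refine forall₄_congr fun m _ x hx => ?_
  rw [iteratedFDerivWithin_of_isOpen m hΩ hx, ← enorm_eq_nnnorm, ← ofReal_norm,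
    ENNReal.ofReal_le_ofReal_iff hM]

theorem holderSemi_le_ofReal_iff (hΩ : IsOpen Ω) (hM : 0 ≤ M) :
    holderSemi s Ω F ≤ ENNReal.ofReal M ↔ ∀ x ∈ Ω, ∀ y ∈ Ω,
      ‖iteratedFDeriv ℝ (lowFloor s) F x - iteratedFDeriv ℝ (lowFloor s) F y‖ ≤
        M * ‖x - y‖ ^ (s - lowFloor s) := by
  simp only [holderSemi, iSup_le_iff]
  refine forall₄_congr fun x hx y hy => ?_
  rcases eq_or_ne x y with rfl | hxy
  · simp only [ne_eq, not_true_eq_false, false_imp_iff, true_iff, sub_self, norm_zero]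
    positivity
  have hpos : 0 < ‖x - y‖ ^ (s - (lowFloor s : ℝ)) :=
    Real.rpow_pos_of_pos (norm_pos_iff.2 (sub_ne_zero.2 hxy)) _
  rw [imp_iff_right hxy, iteratedFDerivWithin_of_isOpen _ hΩ hx,
    iteratedFDerivWithin_of_isOpen _ hΩ hy, ← enorm_eq_nnnorm, ← ofReal_norm,
    ← ENNReal.ofReal_div_of_pos hpos, ENNReal.ofReal_le_ofReal_iff hM, div_le_iff₀ hpos]

theorem rpow_div_rpow_rpow_le_ofReal_iff {a b m : ℝ} (ha : 0 ≤ a) (hb : 0 ≤ b) (hM : 0 ≤ M)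
    (hm : 0 < m) (hms : m < s) :
    (ENNReal.ofReal a ^ s / ENNReal.ofReal b ^ (s - m)) ^ (1 / m) ≤ ENNReal.ofReal M ↔
      a ≤ M ^ (m / s) * b ^ (1 - m / s) := by
  have hs : 0 < s := hm.trans hms
  have hsm : 0 ≤ s - m := (sub_pos.2 hms).le
  have hroot : (M ^ m * b ^ (s - m)) ^ s⁻¹ = M ^ (m / s) * b ^ (1 - m / s) := by
    rw [Real.mul_rpow (by positivity) (by positivity), ← Real.rpow_mul hM, ← Real.rpow_mul hb,
      ← div_eq_mul_inv, ← div_eq_mul_inv, sub_div, div_self hs.ne']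
  rw [one_div, ENNReal.rpow_inv_le_iff hm, ENNReal.div_le_iff_le_mul
      (Or.inr (ENNReal.rpow_ne_top_of_nonneg hm.le ENNReal.ofReal_ne_top))
      (Or.inl (ENNReal.rpow_ne_top_of_nonneg hsm ENNReal.ofReal_ne_top)),
    ENNReal.ofReal_rpow_of_nonneg ha hs.le, ENNReal.ofReal_rpow_of_nonneg hM hm.le,
    ENNReal.ofReal_rpow_of_nonneg hb hsm, ← ENNReal.ofReal_mul (by positivity),
    ENNReal.ofReal_le_ofReal_iff (by positivity),
    ← Real.le_rpow_inv_iff_of_pos ha (by positivity) hs, hroot]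

theorem flatSemi_le_ofReal_iff (hΩ : IsOpen Ω) (hs : 0 < s) (hM : 0 ≤ M)
    (hF : ∀ x ∈ Ω, 0 ≤ F x) :
    flatSemi s Ω F ≤ ENNReal.ofReal M ↔ ∀ m ≤ lowFloor s, ∀ x ∈ Ω,
      ‖iteratedFDeriv ℝ m F x‖ ≤ M ^ (m / s) * F x ^ (1 - m / s) := by
  simp only [flatSemi, iSup_le_iff]
  refine forall_congr' fun m => ?_
  rcases Nat.eq_zero_or_pos m with rfl | hm
  · simp +contextual [abs_of_nonneg, hF]
  rw [imp_iff_right (show 1 ≤ m from hm)]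
  refine forall₃_congr fun hms x hx => ?_
  rw [iteratedFDerivWithin_of_isOpen m hΩ hx, ← enorm_eq_nnnorm, ← ofReal_norm]
  exact rpow_div_rpow_rpow_le_ofReal_iff (norm_nonneg _) (hF x hx) hM (by exact_mod_cast hm)
    (natCast_lt_of_le_lowFloor hs hms)

/-- Membership in the cone `F^s(Ω)` with `F`, its Hölder seminorm and its flat seminorm all bounded
by the real number `M`. -/
structure FlatWith (s M : ℝ) (Ω : Set E) (F : E → ℝ) : Prop where
  const_nonneg : 0 ≤ M
  contDiffOn : ContDiffOn ℝ (lowFloor s) F Ω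
  nonneg : ∀ x ∈ Ω, 0 ≤ F x
  le : ∀ x ∈ Ω, F x ≤ M
  norm_le : ∀ m ≤ lowFloor s, ∀ x ∈ Ω,
    ‖iteratedFDeriv ℝ m F x‖ ≤ M ^ (m / s) * F x ^ (1 - m / s)
  holder : ∀ x ∈ Ω, ∀ y ∈ Ω,
    ‖iteratedFDeriv ℝ (lowFloor s) F x - iteratedFDeriv ℝ (lowFloor s) F y‖ ≤
      M * ‖x - y‖ ^ (s - lowFloor s)

theorem MemFs.fsNorm_ne_top (h : MemFs s Ω F) : fsNorm s Ω F ≠ ∞ :=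
  ENNReal.add_ne_top.2 ⟨h.1.2, h.2.2⟩

theorem MemFs.flatWith (h : MemFs s Ω F) (hΩ : IsOpen Ω) (hs : 0 < s) :
    FlatWith s (fsNorm s Ω F).toReal Ω F := by
  have hM : ENNReal.ofReal (fsNorm s Ω F).toReal = fsNorm s Ω F :=
    ENNReal.ofReal_toReal h.fsNorm_ne_top
  have hM0 : 0 ≤ (fsNorm s Ω F).toReal := ENNReal.toReal_nonneg
  have hcs : csNorm s Ω F ≤ fsNorm s Ω F := le_self_add
  have hderiv := (derivSup_le_ofReal_iff hΩ hM0).1 (hM.symm ▸ le_self_add.trans hcs)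
  refine ⟨hM0, mod_cast h.1.1, h.2.1, fun x hx => ?_,
    (flatSemi_le_ofReal_iff hΩ hs hM0 h.2.1).1 (hM.symm ▸ le_add_self),
    (holderSemi_le_ofReal_iff hΩ hM0).1 (hM.symm ▸ le_add_self.trans hcs)⟩
  simpa only [norm_iteratedFDeriv_zero] using
    (Real.le_norm_self (F x)).trans_eq norm_iteratedFDeriv_zero.symm |>.trans
      (hderiv 0 (Nat.zero_le _) x hx)

end Seminorms

namespace FlatWith

variable {s M : ℝ} {Ω : Set E} {F : E → ℝ}

theorem norm_iteratedFDeriv_le (h : FlatWith s M Ω F) (hs : 0 < s) {m : ℕ}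
    (hm : m ≤ lowFloor s) {x : E} (hx : x ∈ Ω) : ‖iteratedFDeriv ℝ m F x‖ ≤ M := by
  have hM := h.const_nonneg
  have hFx := h.nonneg x hx
  have hms : 0 ≤ 1 - m / s :=
    sub_nonneg.2 ((div_le_one hs).2 (natCast_lt_of_le_lowFloor hs hm).le)
  calc ‖iteratedFDeriv ℝ m F x‖ ≤ M ^ (m / s) * F x ^ (1 - m / s) := h.norm_le m hm x hx
    _ ≤ M ^ (m / s) * M ^ (1 - m / s) := by gcongr; exact h.le x hx
    _ = M := by
        rw [← Real.rpow_add_of_nonneg hM (by positivity) hms, add_sub_cancel, Real.rpow_one]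

theorem fsNorm_le (h : FlatWith s M Ω F) (hΩ : IsOpen Ω) (hs : 0 < s) :
    fsNorm s Ω F ≤ ENNReal.ofReal (3 * M) := by
  have hM := h.const_nonneg
  calc fsNorm s Ω F ≤ ENNReal.ofReal M + ENNReal.ofReal M + ENNReal.ofReal M :=
        add_le_add (add_le_add
          ((derivSup_le_ofReal_iff hΩ hM).2 fun _ hm _ hx => h.norm_iteratedFDeriv_le hs hm hx)
          ((holderSemi_le_ofReal_iff hΩ hM).2 h.holder))
          ((flatSemi_le_ofReal_iff hΩ hs hM h.nonneg).2 h.norm_le)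
    _ = ENNReal.ofReal (3 * M) := by
        rw [← ENNReal.ofReal_add hM hM, ← ENNReal.ofReal_add (by positivity) hM]
        ring_nf

theorem memFs (h : FlatWith s M Ω F) (hΩ : IsOpen Ω) (hs : 0 < s) : MemFs s Ω F := by
  obtain ⟨hcs, hflat⟩ := ENNReal.add_ne_top.1
    (ne_top_of_le_ne_top ENNReal.ofReal_ne_top (h.fsNorm_le hΩ hs))
  exact ⟨⟨mod_cast h.contDiffOn, hcs⟩, h.nonneg, hflat⟩

theorem contDiffAt (h : FlatWith s M Ω F) (hΩ : IsOpen Ω) {x : E} (hx : x ∈ Ω) :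
    ContDiffAt ℝ (lowFloor s) F x :=
  h.contDiffOn.contDiffAt (hΩ.mem_nhds hx)

theorem const_pos (h : FlatWith s M Ω F) {x : E} (hx : x ∈ Ω) (hFx : 0 < F x) : 0 < M :=
  hFx.trans_le (h.le x hx)

end FlatWith

section FlatRate

variable {s M a d : ℝ}

/-- The reciprocal of the length on which a function satisfying `FlatWith s M` varies appreciably
around a point where its value is `a`. -/
def flatRate (s M a : ℝ) : ℝ := (M / a) ^ (1 / s)

theorem flatRate_nonneg (hM : 0 ≤ M) (ha : 0 ≤ a) : 0 ≤ flatRate s M a :=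
  Real.rpow_nonneg (div_nonneg hM ha) _

theorem rpow_mul_flatRate_pow (hM : 0 ≤ M) (ha : 0 < a) (r : ℝ) (i : ℕ) :
    a ^ r * flatRate s M a ^ i = M ^ (i / s) * a ^ (r - i / s) := by
  rw [flatRate, ← Real.rpow_mul_natCast (by positivity), one_div_mul_eq_div,
    Real.div_rpow hM ha.le, Real.rpow_sub ha]
  ring

theorem mul_flatRate_pow (hM : 0 ≤ M) (ha : 0 < a) (i : ℕ) :
    a * flatRate s M a ^ i = M ^ (i / s) * a ^ (1 - i / s) := by
  simpa only [Real.rpow_one] using rpow_mul_flatRate_pow (s := s) hM ha 1 i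

theorem flatRate_mul_rpow_mul (hs : s ≠ 0) (hM : 0 < M) (ha : 0 < a) (hd : 0 ≤ d) (r : ℝ)
    (l : ℕ) :
    (flatRate s M a * d) ^ (r * s - l) * (a ^ r * flatRate s M a ^ l) =
      M ^ r * d ^ (r * s - l) := by
  have hD : 0 < flatRate s M a := Real.rpow_pos_of_pos (div_pos hM ha) _
  have hpow : flatRate s M a ^ (r * s - l) * flatRate s M a ^ l = (M / a) ^ r := by
    rw [← Real.rpow_add_natCast hD.ne', sub_add_cancel, flatRate, ← Real.rpow_mul (by positivity)]
    congr 1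
    field_simp
  have hcancel : (M / a) ^ r * a ^ r = M ^ r := by
    rw [← Real.mul_rpow (by positivity) ha.le, div_mul_cancel₀ _ ha.ne']
  rw [Real.mul_rpow hD.le hd, ← hcancel, ← hpow]
  ring

end FlatRate

namespace FlatWith

variable {r s M : ℝ} {Ω : Set E} {F : E → ℝ} {x y : E}

theorem abs_rpow_one_div_sub_le (h : FlatWith s M Ω F) (hconv : Convex ℝ Ω) (hΩ : IsOpen Ω)
    (hs : 1 < s) (hx : x ∈ Ω) (hy : y ∈ Ω) :
    |F x ^ (1 / s) - F y ^ (1 / s)| ≤ M ^ (1 / s) * ‖x - y‖ := by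
  have hM := h.const_nonneg
  have hs1 : 1 / s ≤ 1 := (div_le_one (by linarith)).2 hs.le
  have hgrad (z : E) (hz : z ∈ Ω) : ‖fderiv ℝ F z‖ ≤ M ^ (1 / s) * F z ^ (1 - 1 / s) := by
    simpa only [norm_iteratedFDeriv_one, Nat.cast_one] using h.norm_le 1 (lowFloor_pos hs) z hz
  calc |F x ^ (1 / s) - F y ^ (1 / s)| ≤ 1 / s * M ^ (1 / s) * ‖x - y‖ :=
        abs_rpow_sub_rpow_le_of_norm_fderiv_le hconv (by positivity) hs1 (by positivity)
          (fun z hz => (h.contDiffAt hΩ hz).differentiableAt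
            (by exact_mod_cast (lowFloor_pos hs).ne')) h.nonneg hgrad hx hy
    _ ≤ M ^ (1 / s) * ‖x - y‖ := by
        rw [mul_assoc]
        exact mul_le_of_le_one_left (by positivity) hs1

theorem le_of_eq_zero (h : FlatWith s M Ω F) (hconv : Convex ℝ Ω) (hΩ : IsOpen Ω) (hs : 1 < s)
    (hx : x ∈ Ω) (hy : y ∈ Ω) (hFx : F x = 0) : F y ≤ M * ‖y - x‖ ^ s := by
  have hM := h.const_nonneg
  have hFy := h.nonneg y hy
  have hs0 : 0 < s := by linarith
  have hroot := h.abs_rpow_one_div_sub_le hconv hΩ hs hy hx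
  rw [hFx, Real.zero_rpow (by positivity), sub_zero, abs_of_nonneg (by positivity),
    one_div] at hroot
  calc F y = (F y ^ s⁻¹) ^ s := (Real.rpow_inv_rpow hFy hs0.ne').symm
    _ ≤ (M ^ s⁻¹ * ‖y - x‖) ^ s := by gcongr
    _ = M * ‖y - x‖ ^ s := by
        rw [Real.mul_rpow (by positivity) (norm_nonneg _), Real.rpow_inv_rpow hM hs0.ne']

theorem mem_Icc_of_near (h : FlatWith s M Ω F) (hconv : Convex ℝ Ω) (hΩ : IsOpen Ω) (hs : 1 < s)
    (hx : x ∈ Ω) (hy : y ∈ Ω) (hFx : 0 < F x) (hxy : flatRate s M (F x) * ‖x - y‖ ≤ 1 / 2) :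
    F y ∈ Icc ((2 ^ s)⁻¹ * F x) (2 ^ s * F x) := by
  have hs0 : 0 < s := by linarith
  have hFy := h.nonneg y hy
  have hpow {a : ℝ} (ha : 0 ≤ a) : (a ^ (1 / s)) ^ s = a := by
    rw [one_div, Real.rpow_inv_rpow ha hs0.ne']
  have hroot : 0 < F x ^ (1 / s) := by positivity
  have hdist : M ^ (1 / s) * ‖x - y‖ ≤ F x ^ (1 / s) / 2 := by
    rw [flatRate, Real.div_rpow h.const_nonneg hFx.le, div_mul_eq_mul_div,
      div_le_iff₀ hroot] at hxy
    linarith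
  have habs := abs_le.1 ((h.abs_rpow_one_div_sub_le hconv hΩ hs hx hy).trans hdist)
  constructor
  · calc (2 ^ s)⁻¹ * F x = (2⁻¹ * F x ^ (1 / s)) ^ s := by
          rw [Real.mul_rpow (by norm_num) hroot.le, hpow hFx.le, Real.inv_rpow zero_le_two]
      _ ≤ (F y ^ (1 / s)) ^ s := by gcongr; linarith
      _ = F y := hpow hFy
  · calc F y = (F y ^ (1 / s)) ^ s := (hpow hFy).symm
      _ ≤ (2 * F x ^ (1 / s)) ^ s := by gcongr; linarith
      _ = 2 ^ s * F x := by rw [Real.mul_rpow zero_le_two hroot.le, hpow hFx.le]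

theorem norm_iteratedFDeriv_le_of_near (h : FlatWith s M Ω F) (hconv : Convex ℝ Ω) (hΩ : IsOpen Ω)
    (hs : 1 < s) (hx : x ∈ Ω) (hy : y ∈ Ω) (hFx : 0 < F x)
    (hxy : flatRate s M (F x) * ‖x - y‖ ≤ 1 / 2) {i : ℕ} (hi : i ≤ lowFloor s) :
    ‖iteratedFDeriv ℝ i F y‖ ≤ 2 ^ s * (F x * flatRate s M (F x) ^ i) := by
  have hs0 : 0 < s := by linarith
  have hM := h.const_nonneg
  have hFy := h.nonneg y hy
  have his : 0 ≤ 1 - (i : ℝ) / s :=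
    sub_nonneg.2 ((div_le_one hs0).2 (natCast_lt_of_le_lowFloor hs0 hi).le)
  rw [mul_flatRate_pow hM hFx]
  calc ‖iteratedFDeriv ℝ i F y‖ ≤ M ^ (i / s) * F y ^ (1 - i / s) := h.norm_le i hi y hy
    _ ≤ M ^ (i / s) * (2 ^ s * F x) ^ (1 - i / s) := by
        gcongr
        exact (h.mem_Icc_of_near hconv hΩ hs hx hy hFx hxy).2
    _ = (2 ^ s) ^ (1 - i / s) * (M ^ (i / s) * F x ^ (1 - i / s)) := by
        rw [Real.mul_rpow (by positivity) hFx.le]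
        ring
    _ ≤ 2 ^ s * (M ^ (i / s) * F x ^ (1 - i / s)) := by
        gcongr
        exact Real.rpow_le_self_of_one_le (Real.one_le_rpow one_le_two hs0.le)
          (sub_le_self _ (by positivity))

theorem norm_iteratedFDeriv_sub_le_of_near_of_lt (h : FlatWith s M Ω F) (hconv : Convex ℝ Ω)
    (hΩ : IsOpen Ω) (hs : 1 < s) (hx : x ∈ Ω) (hy : y ∈ Ω) (hFx : 0 < F x)
    (hxy : flatRate s M (F x) * ‖x - y‖ ≤ 1 / 2) {i : ℕ} (hi : i < lowFloor s) :
    ‖iteratedFDeriv ℝ i F x - iteratedFDeriv ℝ i F y‖ ≤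
      2 ^ s * (flatRate s M (F x) * ‖x - y‖) * (F x * flatRate s M (F x) ^ i) := by
  have hD : 0 ≤ flatRate s M (F x) := flatRate_nonneg h.const_nonneg hFx.le
  have hseg : segment ℝ x y ⊆ Ω := hconv.segment_subset hx hy
  have hmv := (convex_segment x y).norm_image_sub_le_of_norm_hasFDerivWithin_le
    (f := iteratedFDeriv ℝ i F) (C := 2 ^ s * (F x * flatRate s M (F x) ^ (i + 1)))
    (fun z hz => ((h.contDiffAt hΩ (hseg hz)).differentiableAt_iteratedFDeriv
      (by exact_mod_cast hi)).hasFDerivAt.hasFDerivWithinAt)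
    (fun z hz => by
      rw [norm_fderiv_iteratedFDeriv]
      refine h.norm_iteratedFDeriv_le_of_near hconv hΩ hs hx (hseg hz) hFx (le_trans ?_ hxy) hi
      gcongr
      rw [norm_sub_rev x z, norm_sub_rev x y]
      exact norm_sub_le_of_mem_segment hz)
    (right_mem_segment ℝ x y) (left_mem_segment ℝ x y)
  exact hmv.trans_eq (by ring)

theorem norm_iteratedFDeriv_sub_le_of_near (h : FlatWith s M Ω F) (hconv : Convex ℝ Ω)
    (hΩ : IsOpen Ω) (hs : 1 < s) (hx : x ∈ Ω) (hy : y ∈ Ω) (hFx : 0 < F x)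
    (hxy : flatRate s M (F x) * ‖x - y‖ ≤ 1 / 2) {i : ℕ} (hi : i ≤ lowFloor s) {τ : ℝ}
    (hτ0 : 0 ≤ τ) (hτ1 : τ ≤ 1) (hiτ : i + τ ≤ s) :
    ‖iteratedFDeriv ℝ i F x - iteratedFDeriv ℝ i F y‖ ≤
      2 ^ s * (flatRate s M (F x) * ‖x - y‖) ^ τ * (F x * flatRate s M (F x) ^ i) := by
  have hs0 : 0 < s := by linarith
  have hD : 0 ≤ flatRate s M (F x) := flatRate_nonneg h.const_nonneg hFx.le
  have ht0 : 0 ≤ flatRate s M (F x) * ‖x - y‖ := by positivity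
  have hpow {p : ℝ} (hp : τ ≤ p) :
      (flatRate s M (F x) * ‖x - y‖) ^ p ≤ (flatRate s M (F x) * ‖x - y‖) ^ τ :=
    Real.rpow_le_rpow_of_exponent_ge' ht0 (by linarith) hτ0 hp
  rcases hi.lt_or_eq with hi | rfl
  · refine (h.norm_iteratedFDeriv_sub_le_of_near_of_lt hconv hΩ hs hx hy hFx hxy hi).trans ?_
    gcongr
    simpa using hpow hτ1
  · have hscale := flatRate_mul_rpow_mul hs0.ne' (h.const_pos hx hFx) hFx (norm_nonneg (x - y)) 1
      (lowFloor s)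
    rw [one_mul, Real.rpow_one, Real.rpow_one] at hscale
    refine ((h.holder x hx y hy).trans_eq hscale.symm).trans ?_
    gcongr
    exact (hpow (by linarith)).trans
      (le_mul_of_one_le_left (by positivity) (Real.one_le_rpow one_le_two hs0.le))

theorem abs_sub_div_le_of_near (h : FlatWith s M Ω F) (hconv : Convex ℝ Ω) (hΩ : IsOpen Ω)
    (hs : 1 < s) (hx : x ∈ Ω) (hy : y ∈ Ω) (hFx : 0 < F x)
    (hxy : flatRate s M (F x) * ‖x - y‖ ≤ 1 / 2) {τ : ℝ} (hτ0 : 0 ≤ τ) (hτ1 : τ ≤ 1) :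
    |F x - F y| / F x ≤ 2 ^ s * (flatRate s M (F x) * ‖x - y‖) ^ τ := by
  rw [div_le_iff₀ hFx, ← Real.norm_eq_abs, ← norm_iteratedFDeriv_zero_sub (𝕜 := ℝ)]
  simpa only [pow_zero, mul_one] using h.norm_iteratedFDeriv_sub_le_of_near hconv hΩ hs hx hy hFx
    hxy (Nat.zero_le _) hτ0 hτ1 (by push_cast; linarith)

theorem iteratedFDeriv_rpow_eq_taylorComp (h : FlatWith s M Ω F) (hΩ : IsOpen Ω) (hx : x ∈ Ω)
    (hFx : F x ≠ 0) {m : ℕ} (hm : m ≤ lowFloor s) :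
    iteratedFDeriv ℝ m (fun z => F z ^ r) x =
      (ftaylorSeries ℝ (fun t : ℝ => t ^ r) (F x)).taylorComp (ftaylorSeries ℝ F x) m :=
  iteratedFDeriv_comp (g := fun t : ℝ => t ^ r) (Real.contDiffAt_rpow_const_of_ne hFx)
    (h.contDiffAt hΩ hx) (by exact_mod_cast hm)

end FlatWith

section RootConstants

variable {r s : ℝ}

/-- A bound for the coefficients of the Taylor series of `t ↦ t ^ r` and of a function satisfying
`FlatWith s M`, after rescaling by the value of that function and its `flatRate`. -/
def rpowCoeffConst (r s : ℝ) : ℝ := rpowDerivConst r (2 ^ s) (lowFloor s) * 2 ^ s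

theorem rpowDerivConst_le_rpowCoeffConst (hs : 0 ≤ s) :
    rpowDerivConst r (2 ^ s) (lowFloor s) ≤ rpowCoeffConst r s :=
  le_mul_of_one_le_right (zero_le_one.trans (one_le_rpowDerivConst r (by positivity) _))
    (Real.one_le_rpow one_le_two hs)

theorem two_rpow_le_rpowCoeffConst : 2 ^ s ≤ rpowCoeffConst r s :=
  le_mul_of_one_le_left (by positivity) (one_le_rpowDerivConst r (by positivity) _)

theorem one_le_rpowCoeffConst (hs : 0 ≤ s) : 1 ≤ rpowCoeffConst r s :=
  (Real.one_le_rpow one_le_two hs).trans two_rpow_le_rpowCoeffConst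

/-- The constant in the rescaled estimates for the derivatives of `F ^ r`, where `F` satisfies
`FlatWith s M`. -/
def rpowCompConst (r s : ℝ) : ℝ :=
  1 + ∑ m ∈ Finset.range (lowFloor s + 1), taylorCompConst m (rpowCoeffConst r s)

theorem one_le_rpowCompConst (hs : 0 ≤ s) : 1 ≤ rpowCompConst r s :=
  le_add_of_nonneg_right (Finset.sum_nonneg fun m _ =>
    taylorCompConst_nonneg m (zero_le_one.trans (one_le_rpowCoeffConst hs)))

theorem taylorCompConst_le_rpowCompConst (hs : 0 ≤ s) {m : ℕ} (hm : m ≤ lowFloor s) :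
    taylorCompConst m (rpowCoeffConst r s) ≤ rpowCompConst r s :=
  (Finset.single_le_sum (f := fun m => taylorCompConst m (rpowCoeffConst r s))
    (fun m _ => taylorCompConst_nonneg m (zero_le_one.trans (one_le_rpowCoeffConst hs)))
    (Finset.mem_range.2 (by lia))).trans (le_add_of_nonneg_left zero_le_one)

/-- The ratio between a bound for `F ^ r` in `F^{rs}` and the `r`-th power of one for `F` in
`F^s`. -/
def rootConst (r s : ℝ) : ℝ := rpowCompConst r s ^ (r * s) + 4 * rpowCompConst r s

theorem one_le_rootConst (hs : 0 ≤ s) : 1 ≤ rootConst r s := by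
  have hC := one_le_rpowCompConst (r := r) hs
  have : 0 ≤ rpowCompConst r s ^ (r * s) := by positivity
  unfold rootConst
  linarith

end RootConstants

namespace FlatWith

variable {r s M : ℝ} {Ω : Set E} {F : E → ℝ} {x y : E}

theorem norm_iteratedFDeriv_rpow_le (h : FlatWith s M Ω F) (hΩ : IsOpen Ω) (hs : 0 < s)
    (hx : x ∈ Ω) (hFx : 0 < F x) {m : ℕ} (hm : m ≤ lowFloor s) :
    ‖iteratedFDeriv ℝ m (fun z => F z ^ r) x‖ ≤
      rpowCompConst r s * (F x ^ r * flatRate s M (F x) ^ m) := by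
  have hM := h.const_nonneg
  have hD : 0 ≤ flatRate s M (F x) := flatRate_nonneg hM hFx.le
  have h2s : (1 : ℝ) ≤ 2 ^ s := Real.one_le_rpow one_le_two hs.le
  have hB : 1 ≤ rpowCoeffConst r s := one_le_rpowCoeffConst hs.le
  rw [h.iteratedFDeriv_rpow_eq_taylorComp hΩ hx hFx.ne' hm]
  refine (norm_taylorComp_le hFx hB hD (Real.rpow_nonneg hFx.le r) (fun j hj => ?_)
    fun i hi => ?_).trans ?_
  · refine (norm_iteratedFDeriv_rpow_const_le r h2s hFx (self_mem_Icc_inv_mul_mul h2s hFx.le)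
      (n := lowFloor s) (by lia)).trans ?_
    gcongr
    exact rpowDerivConst_le_rpowCoeffConst hs.le
  · rw [mul_flatRate_pow hM hFx]
    exact (h.norm_le i (hi.trans hm) x hx).trans (le_mul_of_one_le_left (by positivity) hB)
  · gcongr
    exact taylorCompConst_le_rpowCompConst hs.le hm

theorem norm_iteratedFDeriv_rpow_sub_le_of_near (h : FlatWith s M Ω F) (hconv : Convex ℝ Ω)
    (hΩ : IsOpen Ω) (hs : 1 < s) (hx : x ∈ Ω) (hy : y ∈ Ω) (hFx : 0 < F x)
    (hxy : flatRate s M (F x) * ‖x - y‖ ≤ 1 / 2) {l : ℕ} (hl : l ≤ lowFloor s) {τ : ℝ}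
    (hτ0 : 0 ≤ τ) (hτ1 : τ ≤ 1) (hlτ : l + τ ≤ s) :
    ‖iteratedFDeriv ℝ l (fun z => F z ^ r) x - iteratedFDeriv ℝ l (fun z => F z ^ r) y‖ ≤
      rpowCompConst r s * (flatRate s M (F x) * ‖x - y‖) ^ τ *
        (F x ^ r * flatRate s M (F x) ^ l) := by
  have hs0 : 0 < s := by linarith
  have hD : 0 ≤ flatRate s M (F x) := flatRate_nonneg h.const_nonneg hFx.le
  have hFy := h.mem_Icc_of_near hconv hΩ hs hx hy hFx hxy
  have hFy0 : 0 < F y := lt_of_lt_of_le (by positivity) hFy.1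
  have h2s : (1 : ℝ) ≤ 2 ^ s := Real.one_le_rpow one_le_two hs0.le
  have hB : 1 ≤ rpowCoeffConst r s := one_le_rpowCoeffConst hs0.le
  have hcoeff (i : ℕ) (hi : i ≤ l) := h.norm_iteratedFDeriv_sub_le_of_near hconv hΩ hs hx hy hFx hxy
    (hi.trans hl) hτ0 hτ1 (by linarith [(Nat.cast_le (α := ℝ)).2 hi])
  rw [h.iteratedFDeriv_rpow_eq_taylorComp hΩ hx hFx.ne' hl,
    h.iteratedFDeriv_rpow_eq_taylorComp hΩ hy hFy0.ne' hl]
  refine (norm_taylorComp_sub_le hFx hB hD (Real.rpow_nonneg hFx.le r)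
    (θ := (flatRate s M (F x) * ‖x - y‖) ^ τ) (by positivity)
    (fun j hj => ?_) (fun j hj => ?_) (fun i hi => ?_) (fun i hi => ?_) fun i hi => ?_).trans ?_
  · refine (norm_iteratedFDeriv_rpow_const_le r h2s hFx (self_mem_Icc_inv_mul_mul h2s hFx.le)
      (n := lowFloor s) (by lia)).trans ?_
    gcongr
    exact rpowDerivConst_le_rpowCoeffConst hs0.le
  · have hconst : 0 ≤ rpowDerivConst r (2 ^ s) (lowFloor s) :=
      zero_le_one.trans (one_le_rpowDerivConst r (by positivity) _)
    refine (norm_iteratedFDeriv_rpow_const_sub_le r h2s hFx hFy (hj.trans hl)).trans ?_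
    rw [rpowCoeffConst, mul_assoc (rpowDerivConst r _ _) (2 ^ s)]
    gcongr
    exact h.abs_sub_div_le_of_near hconv hΩ hs hx hy hFx hxy hτ0 hτ1
  · refine (h.norm_iteratedFDeriv_le_of_near hconv hΩ hs hx hx hFx (by simp) (hi.trans hl)).trans ?_
    gcongr
    exact two_rpow_le_rpowCoeffConst
  · refine (h.norm_iteratedFDeriv_le_of_near hconv hΩ hs hx hy hFx hxy (hi.trans hl)).trans ?_
    gcongr
    exact two_rpow_le_rpowCoeffConst
  · refine (hcoeff i hi).trans ?_
    gcongr
    exact two_rpow_le_rpowCoeffConst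
  · gcongr
    exact taylorCompConst_le_rpowCompConst hs0.le hl

theorem norm_iteratedFDeriv_rpow_le_of_eq_zero (h : FlatWith s M Ω F) (hconv : Convex ℝ Ω)
    (hΩ : IsOpen Ω) (hs : 1 < s) (hx : x ∈ Ω) (hFx : F x = 0) (hy : y ∈ Ω) (hFy : 0 < F y)
    {m : ℕ} (hm : m ≤ lowFloor s) (hmr : m ≤ r * s) :
    ‖iteratedFDeriv ℝ m (fun z => F z ^ r) y‖ ≤
      rpowCompConst r s * M ^ r * ‖y - x‖ ^ (r * s - m) := by
  have hs0 : 0 < s := by linarith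
  have hM := h.const_pos hy hFy
  have hexp : 0 ≤ r - m / s := sub_nonneg.2 ((div_le_iff₀ hs0).2 hmr)
  have hC : 0 ≤ rpowCompConst r s := zero_le_one.trans (one_le_rpowCompConst hs0.le)
  calc ‖iteratedFDeriv ℝ m (fun z => F z ^ r) y‖
      ≤ rpowCompConst r s * (M ^ (m / s) * F y ^ (r - m / s)) := by
        rw [← rpow_mul_flatRate_pow hM.le hFy]
        exact h.norm_iteratedFDeriv_rpow_le hΩ hs0 hy hFy hm
    _ ≤ rpowCompConst r s * (M ^ (m / s) * (M * ‖y - x‖ ^ s) ^ (r - m / s)) := by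
        gcongr
        exact h.le_of_eq_zero hconv hΩ hs hx hy hFx
    _ = rpowCompConst r s * (M ^ (m / s) * M ^ (r - m / s)) * ‖y - x‖ ^ (s * (r - m / s)) := by
        rw [Real.mul_rpow hM.le (by positivity), ← Real.rpow_mul (norm_nonneg _)]
        ring
    _ = rpowCompConst r s * M ^ r * ‖y - x‖ ^ (r * s - m) := by
        rw [← Real.rpow_add hM, add_sub_cancel, mul_sub, mul_div_cancel₀ _ hs0.ne', mul_comm s]

theorem decay_rpow (h : FlatWith s M Ω F) (hconv : Convex ℝ Ω) (hΩ : IsOpen Ω) (hs : 1 < s)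
    (hr0 : 0 < r) (hr1 : r ≤ 1) :
    ∀ m ≤ lowFloor (r * s), ∀ x ∈ Ω, F x ^ r = 0 → ∀ y ∈ Ω, F y ^ r ≠ 0 →
      ‖iteratedFDeriv ℝ m (fun z => F z ^ r) y‖ ≤
        rpowCompConst r s * M ^ r * ‖y - x‖ ^ (r * s - m) := by
  intro m hm x hx hFx y hy hFy
  have hs0 : 0 < s := by linarith
  have hzero {z : E} (hz : z ∈ Ω) : F z ^ r = 0 ↔ F z = 0 :=
    Real.rpow_eq_zero (h.nonneg z hz) hr0.ne'
  exact h.norm_iteratedFDeriv_rpow_le_of_eq_zero hconv hΩ hs hx ((hzero hx).1 hFx) hy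
    ((h.nonneg y hy).lt_of_ne' (mt (hzero hy).2 hFy))
    (hm.trans (lowFloor_mono (mul_le_of_le_one_left hs0.le hr1)))
    (natCast_lt_of_le_lowFloor (by positivity) hm).le

theorem contDiffOn_rpow (h : FlatWith s M Ω F) (hconv : Convex ℝ Ω) (hΩ : IsOpen Ω) (hs : 1 < s)
    (hr0 : 0 < r) (hr1 : r ≤ 1) : ContDiffOn ℝ (lowFloor (r * s)) (fun z => F z ^ r) Ω := by
  have hs0 : 0 < s := by linarith
  have hM := h.const_nonneg
  have hC : 0 ≤ rpowCompConst r s := zero_le_one.trans (one_le_rpowCompConst hs0.le)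
  refine contDiffOn_of_decay hΩ (lowFloor_lt (by positivity))
    (h.decay_rpow hconv hΩ hs hr0 hr1) (by positivity) fun x hx hFx => ?_
  have hFx' : F x ≠ 0 := fun h0 => hFx (by rw [h0, Real.zero_rpow hr0.ne'])
  exact ((h.contDiffAt hΩ hx).of_le
    (by exact_mod_cast lowFloor_mono (mul_le_of_le_one_left hs0.le hr1))).rpow_const_of_ne hFx'

theorem iteratedFDeriv_rpow_eq_zero (h : FlatWith s M Ω F) (hconv : Convex ℝ Ω) (hΩ : IsOpen Ω)
    (hs : 1 < s) (hr0 : 0 < r) (hr1 : r ≤ 1) (hx : x ∈ Ω) (hFx : F x = 0) {m : ℕ}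
    (hm : m ≤ lowFloor (r * s)) : iteratedFDeriv ℝ m (fun z => F z ^ r) x = 0 := by
  have hs0 : 0 < s := by linarith
  have hM := h.const_nonneg
  have hC : 0 ≤ rpowCompConst r s := zero_le_one.trans (one_le_rpowCompConst hs0.le)
  exact iteratedFDeriv_eq_zero_of_decay hΩ (lowFloor_lt (by positivity))
    (h.decay_rpow hconv hΩ hs hr0 hr1) (by positivity) hm hx (by rw [hFx, Real.zero_rpow hr0.ne'])

theorem norm_iteratedFDeriv_rpow_le_rpow_mul_rpow (h : FlatWith s M Ω F) (hconv : Convex ℝ Ω)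
    (hΩ : IsOpen Ω) (hs : 1 < s) (hr0 : 0 < r) (hr1 : r ≤ 1) (hx : x ∈ Ω) {m : ℕ}
    (hm : m ≤ lowFloor (r * s)) :
    ‖iteratedFDeriv ℝ m (fun z => F z ^ r) x‖ ≤
      rpowCompConst r s * (M ^ (m / s) * F x ^ (r - m / s)) := by
  have hs0 : 0 < s := by linarith
  have hM := h.const_nonneg
  have hC : 0 ≤ rpowCompConst r s := zero_le_one.trans (one_le_rpowCompConst hs0.le)
  rcases (h.nonneg x hx).eq_or_lt with hFx | hFx
  · rw [h.iteratedFDeriv_rpow_eq_zero hconv hΩ hs hr0 hr1 hx hFx.symm hm, norm_zero, ← hFx]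
    positivity
  · rw [← rpow_mul_flatRate_pow hM hFx]
    exact h.norm_iteratedFDeriv_rpow_le hΩ hs0 hx hFx
      (hm.trans (lowFloor_mono (mul_le_of_le_one_left hs0.le hr1)))

theorem norm_iteratedFDeriv_rpow_sub_le_of_far (h : FlatWith s M Ω F) (hconv : Convex ℝ Ω)
    (hΩ : IsOpen Ω) (hs : 1 < s) (hr0 : 0 < r) (hr1 : r ≤ 1) (hx : x ∈ Ω) (hy : y ∈ Ω)
    (hFx : 0 < F x) (hyx : F y ≤ F x) (hxy : 1 / 2 ≤ flatRate s M (F x) * ‖x - y‖) {l : ℕ}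
    (hl : l ≤ lowFloor (r * s)) {τ : ℝ} (hτ0 : 0 ≤ τ) (hτ1 : τ ≤ 1) :
    ‖iteratedFDeriv ℝ l (fun z => F z ^ r) x - iteratedFDeriv ℝ l (fun z => F z ^ r) y‖ ≤
      4 * rpowCompConst r s * (flatRate s M (F x) * ‖x - y‖) ^ τ *
        (F x ^ r * flatRate s M (F x) ^ l) := by
  have hs0 : 0 < s := by linarith
  have hM := h.const_nonneg
  have hD : 0 ≤ flatRate s M (F x) := flatRate_nonneg hM hFx.le
  have hC : 0 ≤ rpowCompConst r s := zero_le_one.trans (one_le_rpowCompConst hs0.le)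
  have hexp : 0 ≤ r - l / s := sub_nonneg.2
    ((div_le_iff₀ hs0).2 (natCast_lt_of_le_lowFloor (by positivity) hl).le)
  have hbound (z : E) (hz : z ∈ Ω) (hzx : F z ≤ F x) :
      ‖iteratedFDeriv ℝ l (fun z => F z ^ r) z‖ ≤
        rpowCompConst r s * (F x ^ r * flatRate s M (F x) ^ l) := by
    have hFz := h.nonneg z hz
    rw [rpow_mul_flatRate_pow hM hFx]
    refine (h.norm_iteratedFDeriv_rpow_le_rpow_mul_rpow hconv hΩ hs hr0 hr1 hz hl).trans ?_
    gcongr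
  calc ‖iteratedFDeriv ℝ l (fun z => F z ^ r) x - iteratedFDeriv ℝ l (fun z => F z ^ r) y‖
      ≤ rpowCompConst r s * (F x ^ r * flatRate s M (F x) ^ l) +
          rpowCompConst r s * (F x ^ r * flatRate s M (F x) ^ l) :=
        (norm_sub_le _ _).trans (add_le_add (hbound x hx le_rfl) (hbound y hy hyx))
    _ = 1 * (2 * rpowCompConst r s * (F x ^ r * flatRate s M (F x) ^ l)) := by ring
    _ ≤ 2 * (flatRate s M (F x) * ‖x - y‖) ^ τ *
          (2 * rpowCompConst r s * (F x ^ r * flatRate s M (F x) ^ l)) := by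
        gcongr
        exact one_le_two_mul_rpow hxy hτ0 hτ1
    _ = _ := by ring

theorem norm_iteratedFDeriv_rpow_sub_le (h : FlatWith s M Ω F) (hconv : Convex ℝ Ω)
    (hΩ : IsOpen Ω) (hs : 1 < s) (hr0 : 0 < r) (hr1 : r ≤ 1) (hx : x ∈ Ω) (hy : y ∈ Ω) :
    ‖iteratedFDeriv ℝ (lowFloor (r * s)) (fun z => F z ^ r) x -
        iteratedFDeriv ℝ (lowFloor (r * s)) (fun z => F z ^ r) y‖ ≤
      4 * rpowCompConst r s * (M ^ r * ‖x - y‖ ^ (r * s - lowFloor (r * s))) := by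
  wlog hyx : F y ≤ F x generalizing x y
  · rw [norm_sub_rev, norm_sub_rev x]
    exact this hy hx (le_of_not_ge hyx)
  have hs0 : 0 < s := by linarith
  have hM := h.const_nonneg
  have hC : 0 ≤ rpowCompConst r s := zero_le_one.trans (one_le_rpowCompConst hs0.le)
  rcases (h.nonneg x hx).eq_or_lt with hFx | hFx
  · have hFy : F y = 0 := le_antisymm (hyx.trans_eq hFx.symm) (h.nonneg y hy)
    rw [h.iteratedFDeriv_rpow_eq_zero hconv hΩ hs hr0 hr1 hx hFx.symm le_rfl,
      h.iteratedFDeriv_rpow_eq_zero hconv hΩ hs hr0 hr1 hy hFy le_rfl, sub_self, norm_zero]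
    positivity
  have hrs : r * s ≤ s := mul_le_of_le_one_left hs0.le hr1
  have hτ0 : 0 ≤ r * s - lowFloor (r * s) := sub_nonneg.2 (lowFloor_lt (by positivity)).le
  have hτ1 : r * s - lowFloor (r * s) ≤ 1 := by linarith [le_lowFloor_add_one (r * s)]
  have hD : 0 ≤ flatRate s M (F x) := flatRate_nonneg hM hFx.le
  rw [← flatRate_mul_rpow_mul hs0.ne' (h.const_pos hx hFx) hFx (norm_nonneg _), ← mul_assoc]
  rcases le_total (flatRate s M (F x) * ‖x - y‖) (1 / 2) with hnear | hfar
  · refine (h.norm_iteratedFDeriv_rpow_sub_le_of_near hconv hΩ hs hx hy hFx hnear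
      (lowFloor_mono hrs) hτ0 hτ1 (by linarith)).trans ?_
    gcongr
    linarith
  · exact h.norm_iteratedFDeriv_rpow_sub_le_of_far hconv hΩ hs hr0 hr1 hx hy hFx hyx hfar le_rfl
      hτ0 hτ1

theorem mono (h : FlatWith s M Ω F) (hs : 0 ≤ s) {M' : ℝ} (hM' : M ≤ M') :
    FlatWith s M' Ω F where
  const_nonneg := h.const_nonneg.trans hM'
  contDiffOn := h.contDiffOn
  nonneg := h.nonneg
  le x hx := (h.le x hx).trans hM'
  norm_le m hm x hx := by
    have hM := h.const_nonneg
    have hFx := h.nonneg x hx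
    refine (h.norm_le m hm x hx).trans ?_
    gcongr
  holder x hx y hy := (h.holder x hx y hy).trans (by gcongr)

theorem rpow_of_le_one (h : FlatWith s M Ω F) (hs : 0 < s) (hs1 : s ≤ 1) (hr0 : 0 < r)
    (hr1 : r ≤ 1) : FlatWith (r * s) (M ^ r) Ω fun z => F z ^ r := by
  have hM := h.const_nonneg
  have hl : lowFloor s = 0 := lowFloor_eq_zero hs1
  have hlr : lowFloor (r * s) = 0 := lowFloor_eq_zero (mul_le_one₀ hr1 hs.le hs1)
  have hcont : ContinuousOn F Ω := h.contDiffOn.continuousOn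
  refine ⟨by positivity, ?_, fun x hx => Real.rpow_nonneg (h.nonneg x hx) _,
    fun x hx => Real.rpow_le_rpow (h.nonneg x hx) (h.le x hx) hr0.le, fun m hm x hx => ?_,
    fun x hx y hy => ?_⟩
  · rw [hlr]
    exact contDiffOn_zero.2 (hcont.rpow_const fun _ _ => Or.inr hr0.le)
  · obtain rfl : m = 0 := by lia
    simp [abs_of_nonneg (Real.rpow_nonneg (h.nonneg x hx) r)]
  · have hholder := h.holder x hx y hy
    rw [hl] at hholder
    rw [hlr]
    simp only [norm_iteratedFDeriv_zero_sub, Nat.cast_zero, sub_zero, Real.norm_eq_abs] at hholder ⊢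
    calc |F x ^ r - F y ^ r| ≤ |F x - F y| ^ r :=
          abs_rpow_sub_rpow_le (h.nonneg x hx) (h.nonneg y hy) hr0.le hr1
      _ ≤ (M * ‖x - y‖ ^ s) ^ r := by gcongr
      _ = M ^ r * ‖x - y‖ ^ (r * s) := by
          rw [Real.mul_rpow hM (by positivity), ← Real.rpow_mul (norm_nonneg _), mul_comm s]

theorem rpow_of_one_lt (h : FlatWith s M Ω F) (hconv : Convex ℝ Ω) (hΩ : IsOpen Ω) (hs : 1 < s)
    (hr0 : 0 < r) (hr1 : r ≤ 1) :
    FlatWith (r * s) (rootConst r s * M ^ r) Ω fun z => F z ^ r := by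
  have hs0 : 0 < s := by linarith
  have hM := h.const_nonneg
  have hC : 1 ≤ rpowCompConst r s := one_le_rpowCompConst hs0.le
  have hK : 1 ≤ rootConst r s := one_le_rootConst hs0.le
  refine ⟨by positivity, h.contDiffOn_rpow hconv hΩ hs hr0 hr1,
    fun x hx => Real.rpow_nonneg (h.nonneg x hx) _, fun x hx => ?_, fun m hm x hx => ?_,
    fun x hx y hy => ?_⟩
  · exact (Real.rpow_le_rpow (h.nonneg x hx) (h.le x hx) hr0.le).trans
      (le_mul_of_one_le_left (by positivity) hK)
  · rcases Nat.eq_zero_or_pos m with rfl | hm0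
    · simp [abs_of_nonneg (Real.rpow_nonneg (h.nonneg x hx) r)]
    · exact le_rpow_mul_rpow_of_le hr0 hs0 hC (le_add_of_nonneg_right (by positivity)) hM
        (h.nonneg x hx) hm0 (h.norm_iteratedFDeriv_rpow_le_rpow_mul_rpow hconv hΩ hs hr0 hr1 hx hm)
  · refine (h.norm_iteratedFDeriv_rpow_sub_le hconv hΩ hs hr0 hr1 hx hy).trans ?_
    rw [← mul_assoc]
    gcongr
    exact le_add_of_nonneg_left (by positivity)

theorem rpow (h : FlatWith s M Ω F) (hconv : Convex ℝ Ω) (hΩ : IsOpen Ω) (hs : 0 < s)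
    (hr0 : 0 < r) (hr1 : r ≤ 1) :
    FlatWith (r * s) (rootConst r s * M ^ r) Ω fun z => F z ^ r := by
  rcases le_or_gt s 1 with hs1 | hs1
  · exact (h.rpow_of_le_one hs hs1 hr0 hr1).mono (by positivity)
      (le_mul_of_one_le_left (Real.rpow_nonneg h.const_nonneg r) (one_le_rootConst hs.le))
  · exact h.rpow_of_one_lt hconv hΩ hs1 hr0 hr1

end FlatWith

theorem statement0_general {r s : ℝ} (hr0 : 0 < r) (hr1 : r ≤ 1) (hs : 0 < s) :
    ∃ C : ℝ, 0 < C ∧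
      ∀ (V : Type*) [NormedAddCommGroup V] [NormedSpace ℝ V] (Ω : Set V), Convex ℝ Ω → IsOpen Ω →
      ∀ F : V → ℝ, MemFs s Ω F →
        MemFs (r * s) Ω (fun x => F x ^ r) ∧
        csNorm (r * s) Ω (fun x => F x ^ r) ≤ fsNorm (r * s) Ω (fun x => F x ^ r) ∧
        fsNorm (r * s) Ω (fun x => F x ^ r) ≤ ENNReal.ofReal C * fsNorm s Ω F ^ r := by
  have hrs : 0 < r * s := by positivity
  have hK : 1 ≤ rootConst r s := one_le_rootConst hs.le
  refine ⟨3 * rootConst r s, by positivity, fun V _ _ Ω hconv hΩ F hF => ?_⟩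
  have hroot := (hF.flatWith hΩ hs).rpow hconv hΩ hs hr0 hr1
  refine ⟨hroot.memFs hΩ hrs, le_self_add, (hroot.fsNorm_le hΩ hrs).trans_eq ?_⟩
  rw [← mul_assoc, ENNReal.ofReal_mul (by positivity),
    ← ENNReal.ofReal_rpow_of_nonneg ENNReal.toReal_nonneg hr0.le,
    ENNReal.ofReal_toReal hF.fsNorm_ne_top]

/-- Theorem `root`: for `r ∈ (0,1]`, `s > 0`, and a convex open
`Ω ⊆ ℝⁿ`, there is `C = C(n,r,s)` such that for every nonnegative `F ∈ F^s(Ω)`,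
`F^r ∈ F^{rs}(Ω)` and `‖F^r‖_{C^{rs}} ≤ ‖F^r‖_{F^{rs}} ≤ C ‖F‖_{F^s}^r`. -/
theorem statement0 (n : ℕ) (hn : 1 ≤ n) (r s : ℝ) (hr0 : 0 < r) (hr1 : r ≤ 1)
    (hs : 0 < s) :
    ∃ C : ℝ, 0 < C ∧
      ∀ (Ω : Set (EuclideanSpace ℝ (Fin n))), Convex ℝ Ω → IsOpen Ω →
      ∀ F : EuclideanSpace ℝ (Fin n) → ℝ, MemFs s Ω F →
        MemFs (r * s) Ω (fun x => F x ^ r) ∧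
        csNorm (r * s) Ω (fun x => F x ^ r) ≤ fsNorm (r * s) Ω (fun x => F x ^ r) ∧
        fsNorm (r * s) Ω (fun x => F x ^ r) ≤
          ENNReal.ofReal C * (fsNorm s Ω F) ^ r := by
  obtain ⟨C, hC0, hC⟩ := statement0_general hr0 hr1 hs
  exact ⟨C, hC0, hC (EuclideanSpace ℝ (Fin n))⟩

end
end

section
/- Given ε > 0, n ≥ 1, and s > 0, there exists c₀ > 0 depending only on ε, n, s such that for every 0 < c ≤ c₀ the following holds. Let x₀ ∈ ℝⁿ and let P be a real polynomial on ℝⁿ of degree at most ⌊s⌋ with P(x₀) ≥ 0 and M := max_{1≤m<s} (|∇^m P(x₀)|^s / P(x₀)^{s−m})^{1/m} satisfying 0 < M < ∞. Set δ := c (P(x₀)/M)^{1/s}. Then for all x with |x − x₀| < δ and all 0 ≤ m < s, |∇^m P(x) − ∇^m P(x₀)| ≤ ε · M^{m/s} · P(x₀)^{(s−m)/s}; in particular |P(x) − P(x₀)| ≤ ε P(x₀) for all such x. -/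
open Set ENNReal
open scoped NNReal

noncomputable section

variable {E : Type*} [NormedAddCommGroup E] [NormedSpace ℝ E]

/-!
With `M` the flatness quantity of `P` at `x₀` and `r = (P x₀ / M) ^ (1 / s)`, flatness at `x₀` is
the scale-invariant bound `‖∇^k P(x₀)‖ ≤ P x₀ / r ^ k` for `1 ≤ k < s`. These are the bounds
satisfied by `P x₀ * exp (‖x - x₀‖ / r)`, and since the derivatives of `P` of order at least `s`
vanish, this exponential remains a majorant away from `x₀`: descending on the order `m` and
integrating along segments from `x₀`,
`‖∇^m P(x) - ∇^m P(x₀)‖ ≤ P x₀ / r ^ m * (exp (‖x - x₀‖ / r) - 1)`.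
Hence `c₀ = log (1 + ε)` works, independently of `s` and of the ambient normed space.
-/

section ExponentialGrowth

variable {F : Type*} [NormedAddCommGroup F] [NormedSpace ℝ F]

theorem norm_image_sub_le_mul_exp_sub_one {f : E → F} (hf : Differentiable ℝ f) {x₀ : E}
    {B r : ℝ} (hbound : ∀ y, ‖fderiv ℝ f y‖ ≤ B / r * Real.exp (‖y - x₀‖ / r)) (x : E) :
    ‖f x - f x₀‖ ≤ B * (Real.exp (‖x - x₀‖ / r) - 1) := by
  set v := x - x₀
  have hpath (t : ℝ) : HasDerivAt (fun t : ℝ => f (x₀ + t • v) - f x₀)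
      (fderiv ℝ f (x₀ + t • v) v) t := by
    have hline : HasDerivAt (fun t : ℝ => x₀ + t • v) v t := by
      simpa using ((hasDerivAt_id t).smul_const v).const_add x₀
    exact ((hf _).hasFDerivAt.comp_hasDerivAt t hline).sub_const _
  have hmajorant (t : ℝ) : HasDerivAt (fun t => B * (Real.exp (t * (‖v‖ / r)) - 1))
      (B * (Real.exp (t * (‖v‖ / r)) * (‖v‖ / r))) t :=
    ((hasDerivAt_mul_const (‖v‖ / r)).exp.sub_const 1).const_mul B
  have hspeed (t : ℝ) (ht : t ∈ Ico 0 1) :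
      ‖fderiv ℝ f (x₀ + t • v) v‖ ≤ B * (Real.exp (t * (‖v‖ / r)) * (‖v‖ / r)) := by
    calc ‖fderiv ℝ f (x₀ + t • v) v‖
        ≤ ‖fderiv ℝ f (x₀ + t • v)‖ * ‖v‖ := ContinuousLinearMap.le_opNorm _ _
      _ ≤ B / r * Real.exp (‖x₀ + t • v - x₀‖ / r) * ‖v‖ := by gcongr; exact hbound _
      _ = B * (Real.exp (t * (‖v‖ / r)) * (‖v‖ / r)) := by
        rw [add_sub_cancel_left, norm_smul, Real.norm_of_nonneg ht.1, mul_div_assoc]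
        ring
  have hone := image_norm_le_of_norm_deriv_right_le_deriv_boundary
    (fun t _ => (hpath t).continuousAt.continuousWithinAt)
    (fun t _ => (hpath t).hasDerivWithinAt) (by simp) hmajorant hspeed
    (right_mem_Icc.2 zero_le_one)
  simpa [v] using hone

variable {f : E → F} {x₀ : E} {A r : ℝ} {m D : ℕ}

theorem norm_iteratedFDeriv_sub_le_of_norm_iteratedFDeriv_succ_le
    (hf : ContDiff ℝ (m + 1) f)
    (hsucc : ∀ y, ‖iteratedFDeriv ℝ (m + 1) f y‖ ≤ A / r ^ (m + 1) * Real.exp (‖y - x₀‖ / r))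
    (x : E) :
    ‖iteratedFDeriv ℝ m f x - iteratedFDeriv ℝ m f x₀‖ ≤
      A / r ^ m * (Real.exp (‖x - x₀‖ / r) - 1) := by
  refine norm_image_sub_le_mul_exp_sub_one
    (hf.differentiable_iteratedFDeriv (by exact_mod_cast m.lt_succ_self)) (fun y => ?_) x
  rw [norm_fderiv_iteratedFDeriv, div_div, ← pow_succ]
  exact hsucc y

theorem norm_iteratedFDeriv_le_mul_exp (hf : ContDiff ℝ D f)
    (hx₀ : ∀ k, 1 ≤ k → k < D → ‖iteratedFDeriv ℝ k f x₀‖ ≤ A / r ^ k)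
    (htop : ∀ y, ‖iteratedFDeriv ℝ D f y‖ ≤ A / r ^ D * Real.exp (‖y - x₀‖ / r))
    (hm : 1 ≤ m) (hmD : m ≤ D) (x : E) :
    ‖iteratedFDeriv ℝ m f x‖ ≤ A / r ^ m * Real.exp (‖x - x₀‖ / r) := by
  refine Nat.decreasingInduction'
    (P := fun k => ∀ x, ‖iteratedFDeriv ℝ k f x‖ ≤ A / r ^ k * Real.exp (‖x - x₀‖ / r))
    (fun k hkD hmk ih x => ?_) hmD htop x
  calc ‖iteratedFDeriv ℝ k f x‖
      ≤ ‖iteratedFDeriv ℝ k f x₀‖ + ‖iteratedFDeriv ℝ k f x - iteratedFDeriv ℝ k f x₀‖ :=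
        norm_le_norm_add_norm_sub' _ _
    _ ≤ A / r ^ k + A / r ^ k * (Real.exp (‖x - x₀‖ / r) - 1) := by
        gcongr
        · exact hx₀ k (hm.trans hmk) hkD
        · exact norm_iteratedFDeriv_sub_le_of_norm_iteratedFDeriv_succ_le
            (hf.of_le (by exact_mod_cast hkD)) ih x
    _ = A / r ^ k * Real.exp (‖x - x₀‖ / r) := by ring

end ExponentialGrowth

theorem IsPolyDeg.norm_iteratedFDeriv_sub_le {P : E → ℝ} {D : ℕ} (hP : IsPolyDeg D P) {x₀ : E}
    {A r : ℝ} (hA : 0 ≤ A) (hr : 0 ≤ r)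
    (hx₀ : ∀ k, 1 ≤ k → k ≤ D → ‖iteratedFDeriv ℝ k P x₀‖ ≤ A / r ^ k)
    {m : ℕ} (hm : m ≤ D) (x : E) :
    ‖iteratedFDeriv ℝ m P x - iteratedFDeriv ℝ m P x₀‖ ≤
      A / r ^ m * (Real.exp (‖x - x₀‖ / r) - 1) := by
  have htop (y : E) : ‖iteratedFDeriv ℝ (D + 1) P y‖ ≤
      A / r ^ (D + 1) * Real.exp (‖y - x₀‖ / r) := by
    rw [hP.2 y, norm_zero]
    positivity
  have hsmooth (k : ℕ) : ContDiff ℝ k P := hP.1.of_le (by exact_mod_cast le_top)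
  exact norm_iteratedFDeriv_sub_le_of_norm_iteratedFDeriv_succ_le (hsmooth (m + 1))
    (norm_iteratedFDeriv_le_mul_exp (hsmooth (D + 1))
      (fun k hk hkD => hx₀ k hk (Nat.lt_succ_iff.1 hkD)) htop m.succ_pos (Nat.succ_le_succ hm)) x

section Flatness

variable {s : ℝ}

theorem rpow_div_rpow_rpow_inv_le_iff {a p M t : ℝ} (ha : 0 ≤ a) (hp : 0 < p) (hM : 0 ≤ M)
    (hs : 0 < s) (ht : 0 < t) :
    (a ^ s / p ^ (s - t)) ^ (1 / t) ≤ M ↔ a ≤ M ^ (t / s) * p ^ ((s - t) / s) := by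
  rw [one_div, Real.rpow_inv_le_iff_of_pos (by positivity) hM ht,
    div_le_iff₀ (Real.rpow_pos_of_pos hp _), ← Real.le_rpow_inv_iff_of_pos ha (by positivity) hs,
    Real.mul_rpow (by positivity) (by positivity), ← Real.rpow_mul hM, ← Real.rpow_mul hp.le,
    ← div_eq_mul_inv, ← div_eq_mul_inv]

theorem rpow_mul_rpow_eq_div_pow {p M : ℝ} (hp : 0 < p) (hM : 0 < M) (hs : s ≠ 0) (m : ℕ) :
    M ^ ((m : ℝ) / s) * p ^ ((s - m) / s) = p / ((p / M) ^ (1 / s)) ^ m := by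
  rw [← Real.rpow_natCast, ← Real.rpow_mul (by positivity), Real.div_rpow hp.le hM.le,
    sub_div, div_self hs, Real.rpow_sub hp, Real.rpow_one, one_div_mul_eq_div]
  field_simp

theorem norm_iteratedFDeriv_le_of_jetFlatAt_ne_top {f : E → ℝ} {x₀ : E} (hs : 0 < s)
    (hp : 0 < f x₀) (hfin : jetFlatAt s f x₀ ≠ ∞) {m : ℕ} (hm : 1 ≤ m) (hms : m ≤ lowFloor s) :
    ‖iteratedFDeriv ℝ m f x₀‖ ≤
      (jetFlatAt s f x₀).toReal ^ ((m : ℝ) / s) * f x₀ ^ ((s - m) / s) := by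
  have hle : ((‖iteratedFDeriv ℝ m f x₀‖₊ : ℝ≥0∞) ^ s
      / ENNReal.ofReal (f x₀) ^ (s - (m : ℝ))) ^ (1 / (m : ℝ)) ≤ jetFlatAt s f x₀ :=
    le_iSup₂_of_le m hm (le_iSup_of_le hms le_rfl)
  have hreal := ENNReal.toReal_mono hfin hle
  rw [← ENNReal.toReal_rpow, ENNReal.toReal_div, ← ENNReal.toReal_rpow, ← ENNReal.toReal_rpow,
    ENNReal.toReal_ofReal hp.le, ENNReal.coe_toReal, coe_nnnorm] at hreal
  exact (rpow_div_rpow_rpow_inv_le_iff (norm_nonneg _) hp ENNReal.toReal_nonneg hs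
    (by exact_mod_cast hm)).1 hreal

theorem IsPolyDeg.norm_iteratedFDeriv_sub_le_of_jetFlatAt {P : E → ℝ} {x₀ : E} (hs : 0 < s)
    (hP : IsPolyDeg (lowFloor s) P) (hp : 0 < P x₀) (hpos : 0 < jetFlatAt s P x₀)
    (hfin : jetFlatAt s P x₀ ≠ ∞) {m : ℕ} (hm : m ≤ lowFloor s) (x : E) :
    ‖iteratedFDeriv ℝ m P x - iteratedFDeriv ℝ m P x₀‖ ≤
      (Real.exp (‖x - x₀‖ / (P x₀ / (jetFlatAt s P x₀).toReal) ^ (1 / s)) - 1)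
        * (jetFlatAt s P x₀).toReal ^ ((m : ℝ) / s) * P x₀ ^ ((s - m) / s) := by
  have hM : 0 < (jetFlatAt s P x₀).toReal := ENNReal.toReal_pos hpos.ne' hfin
  rw [mul_assoc, rpow_mul_rpow_eq_div_pow hp hM hs.ne', mul_comm]
  refine hP.norm_iteratedFDeriv_sub_le hp.le (by positivity) (fun k hk hks => ?_) hm x
  rw [← rpow_mul_rpow_eq_div_pow hp hM hs.ne']
  exact norm_iteratedFDeriv_le_of_jetFlatAt_ne_top hs hp hfin hk hks

end Flatness

theorem statement6_general {ε s c : ℝ} (hε : 0 < ε) (hs : 0 < s) (hc : c ≤ Real.log (1 + ε))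
    {x₀ : E} {P : E → ℝ} (hP : IsPolyDeg (lowFloor s) P) (hnonneg : 0 ≤ P x₀)
    (hpos : 0 < jetFlatAt s P x₀) (hfin : jetFlatAt s P x₀ ≠ ∞) {x : E}
    (hx : ‖x - x₀‖ < c * (P x₀ / (jetFlatAt s P x₀).toReal) ^ (1 / s)) :
    (∀ m ≤ lowFloor s,
      ‖iteratedFDeriv ℝ m P x - iteratedFDeriv ℝ m P x₀‖ ≤
        ε * (jetFlatAt s P x₀).toReal ^ ((m : ℝ) / s) * P x₀ ^ ((s - (m : ℝ)) / s)) ∧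
    |P x - P x₀| ≤ ε * P x₀ := by
  have hp : 0 < P x₀ := by
    refine hnonneg.lt_of_ne' fun h0 => (norm_nonneg (x - x₀)).not_gt ?_
    rwa [h0, zero_div, Real.zero_rpow (one_div_pos.2 hs).ne', mul_zero] at hx
  have hM : 0 < (jetFlatAt s P x₀).toReal := ENNReal.toReal_pos hpos.ne' hfin
  have hexp : Real.exp (‖x - x₀‖ / (P x₀ / (jetFlatAt s P x₀).toReal) ^ (1 / s)) - 1 ≤ ε := by
    rw [sub_le_iff_le_add', ← Real.le_log_iff_exp_le (by positivity)]
    exact ((div_le_iff₀ (by positivity)).2 hx.le).trans hc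
  have hosc (m : ℕ) (hm : m ≤ lowFloor s) :
      ‖iteratedFDeriv ℝ m P x - iteratedFDeriv ℝ m P x₀‖ ≤
        ε * (jetFlatAt s P x₀).toReal ^ ((m : ℝ) / s) * P x₀ ^ ((s - (m : ℝ)) / s) :=
    (hP.norm_iteratedFDeriv_sub_le_of_jetFlatAt hs hp hpos hfin hm x).trans (by gcongr)
  refine ⟨hosc, ?_⟩
  have hvalue : ‖iteratedFDeriv ℝ 0 P x - iteratedFDeriv ℝ 0 P x₀‖ = |P x - P x₀| := by
    simpa only [iteratedFDerivWithin_univ, dist_eq_norm, Real.norm_eq_abs] using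
      dist_iteratedFDerivWithin_zero (𝕜 := ℝ) P univ x P univ x₀
  simpa [hvalue, div_self hs.ne'] using hosc 0 (Nat.zero_le _)

/-- Lemma `locally constant`(A): given `ε > 0` there is
`c₀ = c₀(ε,n,s) > 0` such that for `0 < c ≤ c₀`, every polynomial `P` of degree
at most `⌊s⌋` with `P(x₀) ≥ 0` and `0 < M < ∞` (where `M` is the pointwise
flatness quantity) satisfies
`|∇^m P(x) − ∇^m P(x₀)| ≤ ε M^{m/s} P(x₀)^{(s−m)/s}` for `|x − x₀| < c (P(x₀)/M)^{1/s}`,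
and in particular `|P(x) − P(x₀)| ≤ ε P(x₀)`. -/
theorem statement6 (ε : ℝ) (hε : 0 < ε) (n : ℕ) (hn : 1 ≤ n) (s : ℝ) (hs : 0 < s) :
    ∃ c₀ : ℝ, 0 < c₀ ∧
      ∀ c : ℝ, 0 < c → c ≤ c₀ →
      ∀ (x₀ : EuclideanSpace ℝ (Fin n)) (P : EuclideanSpace ℝ (Fin n) → ℝ),
        IsPolyDeg (lowFloor s) P → 0 ≤ P x₀ →
        0 < jetFlatAt s P x₀ → jetFlatAt s P x₀ ≠ ∞ →
      ∀ x : EuclideanSpace ℝ (Fin n),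
        ‖x - x₀‖ < c * (P x₀ / (jetFlatAt s P x₀).toReal) ^ (1 / s) →
        (∀ m ≤ lowFloor s,
          ‖iteratedFDeriv ℝ m P x - iteratedFDeriv ℝ m P x₀‖ ≤
            ε * (jetFlatAt s P x₀).toReal ^ ((m : ℝ) / s)
              * (P x₀) ^ ((s - (m : ℝ)) / s)) ∧
        |P x - P x₀| ≤ ε * P x₀ := by
  exact ⟨Real.log (1 + ε), Real.log_pos (by linarith), fun _ _ hc _ _ hP hp hpos hfin _ hx =>
    statement6_general hε hs hc hP hp hpos hfin hx⟩

end
end
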